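/- arXiv:solv-int/9903014 — 3 statements merged into one kernel-verified Lean document; each statement's English description precedes it below -/
import Mathlib

section
/- Let w be a smooth solution of P_XXXIV[α] on an open interval I ⊆ ℝ, and let ψ_0 be a nowhere-vanishing smooth function on I satisfying both (L1) and (L2) with this w and parameter α. Define the sequences ψ_n, φ_n and the Hankel determinants τ_N from w and ψ_0. Then for every integer N such that τ_N is nowhere zero on I, the function W = w + 2(τ_N''·τ_N − (τ_N')²)/τ_N² (that is, W = w + 2(log τ_N)'') is a solution of P_XXXIV[α+N] on I. -/
/-- The Hankel determinant `τ_N` built from the sequences `ψ` (for `N > 0`) and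
`φ` (for `N < 0`); `τ_0 = 1` (determinant of the empty matrix). -/
noncomputable def hankelTau (ψ φ : ℕ → ℝ → ℝ) (N : ℤ) : ℝ → ℝ :=
  fun z =>
    if 0 ≤ N then
      Matrix.det (Matrix.of fun i j : Fin N.toNat => ψ ((i : ℕ) + (j : ℕ)) z)
    else
      Matrix.det (Matrix.of fun i j : Fin (-N).toNat => φ ((i : ℕ) + (j : ℕ)) z)

open Finset in
theorem my_D_prod {R ι : Type*} [CommRing R] [DecidableEq ι] (D : Derivation ℤ R R) (s : Finset ι) (f : ι → R) :
    D (∏ i ∈ s, f i) = ∑ i ∈ s, ∏ j ∈ s, (if j = i then D (f j) else f j) := by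
  induction s using Finset.induction_on with
  | empty => simp
  | insert a s ha ih =>
    rw [prod_insert ha, Derivation.leibniz, ih, sum_insert ha, prod_insert ha]
    have h1 : ∏ j ∈ s, (if j = a then D (f j) else f j) = ∏ j ∈ s, f j := by
      apply prod_congr rfl
      intro j hj
      rw [if_neg]; rintro rfl; exact ha hj
    have h2 : ∀ i ∈ s, ∏ j ∈ insert a s, (if j = i then D (f j) else f j)
        = f a * ∏ j ∈ s, (if j = i then D (f j) else f j) := by
      intro i hi
      rw [prod_insert ha, if_neg]; rintro rfl; exact ha hi
    rw [sum_congr rfl h2, h1, ← mul_sum]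
    simp only [smul_eq_mul, if_true]
    ring

theorem my_D_det {R n : Type*} [CommRing R] [DecidableEq n] [Fintype n] (D : Derivation ℤ R R)
    (M : Matrix n n R) : D M.det = (M.adjugate * M.map D).trace := by
  have h : (M.adjugate * M.map D).trace = ∑ i, (M.updateCol i (fun k => D (M k i))).det := by
    rw [Matrix.trace]
    apply Finset.sum_congr rfl
    intro i _
    rw [← Matrix.cramer_apply, Matrix.cramer_eq_adjugate_mulVec]
    rfl
  rw [h]
  simp only [Matrix.det_apply]
  rw [Finset.sum_comm, map_sum]
  apply Finset.sum_congr rfl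
  intro σ _
  rw [← Finset.smul_sum, Units.smul_def, map_zsmul, my_D_prod, Units.smul_def]
  congr 1
  apply Finset.sum_congr rfl
  intro i _
  apply Finset.prod_congr rfl
  intro j _
  rw [Matrix.updateCol_apply]
  split_ifs with h
  · subst h; rfl
  · rfl

theorem my_trace_col {R n : Type*} [CommRing R] [DecidableEq n] [Fintype n] 
    (M Y : Matrix n n R) : (M.adjugate * Y).trace = ∑ i, (M.updateCol i (fun k => Y k i)).det := by
  rw [Matrix.trace]
  apply Finset.sum_congr rfl
  intro i _
  rw [← Matrix.cramer_apply, Matrix.cramer_eq_adjugate_mulVec]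
  rfl

theorem my_trace_row {R n : Type*} [CommRing R] [DecidableEq n] [Fintype n] 
    (M Y : Matrix n n R) : (M.adjugate * Y).trace = ∑ i, (M.updateRow i (Y i)).det := by
  rw [← Matrix.trace_transpose, Matrix.transpose_mul, Matrix.trace_mul_comm, Matrix.adjugate_transpose,
    my_trace_col]
  apply Finset.sum_congr rfl
  intro i _
  rw [← Matrix.det_transpose, Matrix.updateCol_transpose, Matrix.transpose_transpose]
  rfl

/-- split of the convolution -/
theorem my_conv {R : Type*} [CommRing R] (a : ℕ → R) (i c : ℕ) :
    ∑ k ∈ Finset.range (i + c), a k * a (i + c - 1 - k) =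
      ∑ k ∈ Finset.range i, a (i - 1 - k) * a (k + c)
      + ∑ m ∈ Finset.range c, a (i + m) * a (c - 1 - m) := by
  rw [Finset.sum_range_add, ← Finset.sum_range_reflect]
  congr 1
  · apply Finset.sum_congr rfl
    intro k hk
    have := Finset.mem_range.1 hk
    congr 2; omega
  · apply Finset.sum_congr rfl
    intro k hk
    have := Finset.mem_range.1 hk
    congr 2; omega

/-- derivative of a determinant with Hankel-like entries -/
theorem my_D_hankel {R : Type*} [CommRing R] (D : Derivation ℤ R R) (a : ℕ → R) (φ : R)
    (ha : ∀ n, D (a n) = a (n + 1) - φ * ∑ k ∈ Finset.range n, a k * a (n - 1 - k))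
    (n : ℕ) (c : Fin n → ℕ) :
    D (Matrix.det (Matrix.of fun i j : Fin n => a (i + c j))) =
      ∑ i, ((Matrix.of fun i j : Fin n => a (i + c j)).updateRow i (fun j => a (i + 1 + c j))).det
      - φ * ∑ j, ∑ m ∈ Finset.range (c j), a (c j - 1 - m) *
        ((Matrix.of fun i j : Fin n => a (i + c j)).updateCol j (fun i => a (i + m))).det := by
  set B : Matrix (Fin n) (Fin n) R := Matrix.of fun i j : Fin n => a (i + c j) with hB
  let L : Matrix (Fin n) (Fin n) R := Matrix.of fun i k => if (k : ℕ) < i then a (i - 1 - k) else 0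
  let S : Matrix (Fin n) (Fin n) R := Matrix.of fun i j : Fin n => a (i + 1 + c j)
  let Y : Matrix (Fin n) (Fin n) R := Matrix.of fun i j : Fin n =>
    ∑ m ∈ Finset.range (c j), a (i + m) * a (c j - 1 - m)
  have hD : B.map D = S - φ • (L * B + Y) := by
    ext i j
    simp only [Matrix.map_apply, Matrix.sub_apply, Matrix.smul_apply, Matrix.add_apply, hB, S, Y,
      Matrix.of_apply, smul_eq_mul, Matrix.mul_apply, L]
    rw [ha, my_conv]
    have e1 : (i : ℕ) + c j + 1 = i + 1 + c j := by omega
    have e2 : ∑ k ∈ Finset.range (i : ℕ), a (i - 1 - k) * a (k + c j)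
      = ∑ x : Fin n, (if (x : ℕ) < i then a (i - 1 - x) else 0) * a (x + c j) := by
      rw [Fin.sum_univ_eq_sum_range (fun x => (if x < (i : ℕ) then a (i - 1 - x) else 0) * a (x + c j)) n]
      have hs : Finset.range (i : ℕ) ⊆ Finset.range n := by
        apply Finset.range_subset_range.2; omega
      rw [← Finset.sum_subset hs]
      · apply Finset.sum_congr rfl
        intro k hk
        rw [if_pos (Finset.mem_range.1 hk)]
      · intro x _ hx
        rw [if_neg (by simpa using hx), zero_mul]
    rw [e1, e2]
  have hL : L.trace = 0 := by
    simp [Matrix.trace, L]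
  have hLB : (B.adjugate * (L * B)).trace = 0 := by
    rw [← Matrix.mul_assoc, Matrix.trace_mul_comm, ← Matrix.mul_assoc, Matrix.mul_adjugate]
    simp [hL]
  have hY : (B.adjugate * Y).trace = ∑ j, ∑ m ∈ Finset.range (c j), a (c j - 1 - m) *
        (B.updateCol j (fun i => a (i + m))).det := by
    rw [my_trace_col]
    apply Finset.sum_congr rfl
    intro j _
    have : (fun k => Y k j) = ∑ m ∈ Finset.range (c j), a (c j - 1 - m) • (fun k : Fin n => a (k + m)) := by
      ext k
      simp [Y, Finset.sum_apply, mul_comm]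
    rw [← Matrix.cramer_apply, this, map_sum, Finset.sum_apply]
    apply Finset.sum_congr rfl
    intro m _
    rw [map_smul, Pi.smul_apply, smul_eq_mul, Matrix.cramer_apply]
  rw [my_D_det, hD, Matrix.mul_sub, Matrix.mul_smul, Matrix.mul_add, Matrix.trace_sub, Matrix.trace_smul,
    Matrix.trace_add, hLB, hY, my_trace_row, zero_add, smul_eq_mul]
  rfl

def skp (N i : ℕ) : ℕ := if i = N then N + 1 else i

theorem my_row_last {R : Type*} [CommRing R] (a : ℕ → R) (N : ℕ) (c : Fin (N+1) → ℕ) :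
   ∑ i, ((Matrix.of fun i j : Fin (N+1) => a (i + c j)).updateRow i (fun j => a (i + 1 + c j))).det
    = Matrix.det (Matrix.of fun i j : Fin (N+1) => a (skp N i + c j)) := by
  rw [Finset.sum_eq_single (Fin.last N)]
  · congr 1
    ext i j
    rw [Matrix.updateRow_apply]
    by_cases h : i = Fin.last N
    · subst h; simp [skp]
    · have : (i : ℕ) ≠ N := fun h' => h (Fin.ext (by simpa using h'))
      simp [skp, h, this]
  · intro i _ hi
    have : (i : ℕ) ≠ N := fun h' => hi (Fin.ext (by simpa using h'))
    have hlt : (i : ℕ) + 1 < N + 1 := by omega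
    apply Matrix.det_zero_of_row_eq (i := i) (j := ⟨i + 1, hlt⟩)
    · intro h; have := congrArg Fin.val h; simp at this
    · ext j
      rw [Matrix.updateRow_self, Matrix.updateRow_ne]
      · simp
      · intro h; have := congrArg Fin.val h; simp at this
  · simp

theorem my_upd_zero {R : Type*} [CommRing R] (a : ℕ → R) (n : ℕ) (c : Fin n → ℕ) (j k : Fin n)
   (hjk : j ≠ k) :
   ((Matrix.of fun i j : Fin n => a (i + c j)).updateCol j (fun i => a (i + c k))).det = 0 := by
  apply Matrix.det_zero_of_column_eq hjk
  intro i
  rw [Matrix.updateCol_self, Matrix.updateCol_ne hjk.symm]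
  simp

theorem my_D1 {R : Type*} [CommRing R] (D : Derivation ℤ R R) (a : ℕ → R) (φ : R)
    (ha : ∀ n, D (a n) = a (n + 1) - φ * ∑ k ∈ Finset.range n, a k * a (n - 1 - k))
    (N : ℕ) :
    D (Matrix.det (Matrix.of fun i j : Fin (N+1) => a (i + j))) =
      Matrix.det (Matrix.of fun i j : Fin (N+1) => a (i + skp N j)) := by
  rw [my_D_hankel D a φ ha (N+1) (fun j => j), my_row_last]
  rw [Finset.sum_eq_zero, mul_zero, sub_zero]
  · rw [← Matrix.det_transpose]
    congr 1
    ext i j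
    simp [add_comm]
  · intro j _
    apply Finset.sum_eq_zero
    intro m hm
    have hm := Finset.mem_range.1 hm
    have := my_upd_zero a (N+1) (fun j => j) j ⟨m, by omega⟩ (by intro h; have := congrArg Fin.val h; simp at this; omega)
    simp only at this
    rw [this, mul_zero]

theorem my_D2 {R : Type*} [CommRing R] (D : Derivation ℤ R R) (a : ℕ → R) (φ : R)
    (ha : ∀ n, D (a n) = a (n + 1) - φ * ∑ k ∈ Finset.range n, a k * a (n - 1 - k))
    (N : ℕ) :
    D (Matrix.det (Matrix.of fun i j : Fin (N+1) => a (i + skp N j))) =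
      Matrix.det (Matrix.of fun i j : Fin (N+1) => a (skp N i + skp N j)) 
       - φ * (a 0 * Matrix.det (Matrix.of fun i j : Fin (N+1) => a (i + j))) := by
  rw [my_D_hankel D a φ ha (N+1) (fun j => skp N j), my_row_last]
  congr 2
  have key : ∀ (j : Fin (N+1)) (m : ℕ), m < N → m ≠ j → 
    ((Matrix.of fun i j : Fin (N+1) => a (i + skp N j)).updateCol j (fun i => a (i + m))).det = 0 := by
    intro j m hm hj
    have := my_upd_zero a (N+1) (fun j => skp N j) j ⟨m, by omega⟩ (by intro h; have := congrArg Fin.val h; simp at this; omega)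
    simp only [skp, if_neg hm.ne] at this
    exact this
  rw [Finset.sum_eq_single (Fin.last N)]
  · have : skp N (Fin.last N) = N + 1 := by simp [skp]
    rw [this, Finset.sum_range_succ, Finset.sum_eq_zero]
    · simp only [Nat.add_sub_cancel, Nat.sub_self, zero_add]
      congr 2
      ext i j
      rw [Matrix.updateCol_apply]
      by_cases h : j = Fin.last N
      · subst h; simp
      · have : (j : ℕ) ≠ N := fun h' => h (Fin.ext (by simpa using h'))
        simp [skp, h, this]
    · intro m hm
      have hm := Finset.mem_range.1 hm
      rw [key _ m hm (by simp; omega), mul_zero]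
  · intro j _ hj
    have hne : (j : ℕ) ≠ N := fun h' => hj (Fin.ext (by simpa using h'))
    apply Finset.sum_eq_zero
    intro m hm
    have hm := Finset.mem_range.1 hm
    simp only [skp, if_neg hne] at hm
    rw [key _ m (by omega) (by omega), mul_zero]
  · simp

theorem my_schur {K : Type*} [Field K] (m : ℕ → ℕ → K) (N : ℕ)
   (hA : Matrix.det (Matrix.of fun i j : Fin N => m i j) ≠ 0) : 
   ∃ q : ℕ → ℕ → K, ∀ (k : ℕ) (e f : ℕ → ℕ), (∀ i < N, e i = i) → (∀ i < N, f i = i) →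
     Matrix.det (Matrix.of fun i j : Fin (N + k) => m (e i) (f j)) =
      Matrix.det (Matrix.of fun i j : Fin N => m i j) * 
        Matrix.det (Matrix.of fun i j : Fin k => q (e (N + i)) (f (N + j))) := by
  set A : Matrix (Fin N) (Fin N) K := Matrix.of fun i j : Fin N => m i j with hAdef
  have : Invertible A := Matrix.invertibleOfIsUnitDet A (isUnit_iff_ne_zero.2 hA)
  refine ⟨fun x y => m x y - ∑ j : Fin N, (∑ i : Fin N, m x i * (⅟A) i j) * m j y, ?_⟩
  intro k e f he hf
  rw [← Matrix.det_submatrix_equiv_self finSumFinEquiv]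
  let B : Matrix (Fin N) (Fin k) K := Matrix.of fun i j => m i (f (N + j))
  let C : Matrix (Fin k) (Fin N) K := Matrix.of fun i j => m (e (N + i)) j
  let E : Matrix (Fin k) (Fin k) K := Matrix.of fun i j => m (e (N + i)) (f (N + j))
  have : (Matrix.of fun i j : Fin (N + k) => m (e i) (f j)).submatrix finSumFinEquiv finSumFinEquiv
     = Matrix.fromBlocks A B C E := by
    ext i j
    rcases i with i | i <;> rcases j with j | j <;> simp [A, B, C, E, he, hf]
  rw [this, Matrix.det_fromBlocks₁₁]
  congr 1

theorem my_jacobi_field {K : Type*} [Field K] (m : ℕ → ℕ → K) (N : ℕ)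
   (hA : Matrix.det (Matrix.of fun i j : Fin N => m i j) ≠ 0) : 
   Matrix.det (Matrix.of fun i j : Fin N => m i j) * Matrix.det (Matrix.of fun i j : Fin (N+2) => m i j)
    = Matrix.det (Matrix.of fun i j : Fin (N+1) => m i j) 
        * Matrix.det (Matrix.of fun i j : Fin (N+1) => m (skp N i) (skp N j))
     - Matrix.det (Matrix.of fun i j : Fin (N+1) => m i (skp N j)) 
        * Matrix.det (Matrix.of fun i j : Fin (N+1) => m (skp N i) j) := by
  obtain ⟨q, hq⟩ := my_schur m N hA
  have hs : ∀ i < N, skp N i = i := fun i hi => by simp [skp, hi.ne]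
  rw [hq 2 (fun i => i) (fun i => i) (fun _ _ => rfl) (fun _ _ => rfl),
    hq 1 (fun i => i) (fun i => i) (fun _ _ => rfl) (fun _ _ => rfl),
    hq 1 (fun i => i) (skp N) (fun _ _ => rfl) hs,
    hq 1 (skp N) (fun i => i) hs (fun _ _ => rfl),
    hq 1 (skp N) (skp N) hs hs]
  simp [Matrix.det_fin_two, skp]
  ring

theorem my_jacobi {R : Type*} [CommRing R] [IsDomain R] (m : ℕ → ℕ → R) (N : ℕ)
   (hA : Matrix.det (Matrix.of fun i j : Fin N => m i j) ≠ 0) : 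
   Matrix.det (Matrix.of fun i j : Fin N => m i j) * Matrix.det (Matrix.of fun i j : Fin (N+2) => m i j)
    = Matrix.det (Matrix.of fun i j : Fin (N+1) => m i j) 
        * Matrix.det (Matrix.of fun i j : Fin (N+1) => m (skp N i) (skp N j))
     - Matrix.det (Matrix.of fun i j : Fin (N+1) => m i (skp N j)) 
        * Matrix.det (Matrix.of fun i j : Fin (N+1) => m (skp N i) j) := by
  have hinj := IsFractionRing.injective R (FractionRing R)
  have hmap : ∀ (n : ℕ) (e f : ℕ → ℕ), algebraMap R (FractionRing R) 
      (Matrix.det (Matrix.of fun i j : Fin n => m (e i) (f j)))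
      = Matrix.det (Matrix.of fun i j : Fin n => algebraMap R (FractionRing R) (m (e i) (f j))) := by
    intro n e f
    rw [RingHom.map_det]
    rfl
  apply hinj
  have h1 := fun n => hmap n (fun i => i) (fun i => i)
  have h2 := fun n => hmap n (skp N) (fun i => i)
  have h3 := fun n => hmap n (fun i => i) (skp N)
  have h4 := fun n => hmap n (skp N) (skp N)
  rw [map_sub, map_mul, map_mul, map_mul, h1, h1, h1, h2, h3, h4]
  apply my_jacobi_field (fun x y => algebraMap R (FractionRing R) (m x y))
  rw [← h1]
  exact fun h => hA (hinj (by rw [h, map_zero]))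

theorem my_toda {R : Type*} [CommRing R] [IsDomain R] (D : Derivation ℤ R R) (a : ℕ → R) (φ : R)
    (ha : ∀ n, D (a n) = a (n + 1) - φ * ∑ k ∈ Finset.range n, a k * a (n - 1 - k))
    (τ : ℕ → R) (hτ : ∀ n, τ n = Matrix.det (Matrix.of fun i j : Fin n => a (i + j)))
    (N : ℕ) (hN : τ N ≠ 0) :
    τ N * τ (N+2) = τ (N+1) * D (D (τ (N+1))) - D (τ (N+1)) ^ 2 + φ * a 0 * τ (N+1) ^ 2 := by
  have h1 := my_D1 D a φ ha N
  have h2 := my_D2 D a φ ha N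
  rw [← h1, ← hτ] at h2
  have hsym : Matrix.det (Matrix.of fun i j : Fin (N+1) => a (skp N i + j)) = D (τ (N+1)) := by
    rw [hτ, h1, ← Matrix.det_transpose]
    congr 1
    ext i j
    simp [add_comm]
  have h3 := my_jacobi (fun x y => a (x + y)) N (by rw [← hτ]; exact hN)
  rw [← hτ, ← hτ, ← hτ, ← h1, ← hτ, hsym] at h3
  rw [h3, h2]
  ring

theorem my_step {R : Type*} [CommRing R] [IsDomain R] (D : Derivation ℤ R R) (f g h k c z K : R)
    (hg : g ≠ 0) (hz : D z = 1) (hK : D K = 0)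
    (E1 : f * h = g * D (D g) - D g ^ 2 + c * g ^ 2)
    (E2 : f * D h - D f * h = K * g ^ 2)
    (E3 : D (D h) * g - 2 * (D h * D g) + h * D (D g) + (2 * c - 2 * z) * (h * g) = 0)
    (M : g * k = h * D (D h) - D h ^ 2 + c * h ^ 2) :
    (g * D k - D g * k = (K + 2) * h ^ 2) ∧
    D (D k) * h - 2 * (D k * D h) + k * D (D h) + (2 * c - 2 * z) * (k * h) = 0 := by
  have D2 : D (2 : R) = 0 := by simpa using D.map_natCast 2
  have E1' := congrArg D E1
  have E3' := congrArg D E3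
  have M' := congrArg D M
  simp only [map_add, map_sub, Derivation.leibniz, Derivation.leibniz_pow, smul_eq_mul, hz, D2,
    map_zero, nsmul_eq_mul, Nat.cast_ofNat, pow_one, Nat.add_one_sub_one, mul_zero, add_zero] at E1' E3' M'
  have hB2 : g * D k - D g * k = (K + 2) * h ^ 2 := by
    have hg2 : g ^ 2 ≠ 0 := pow_ne_zero _ hg
    have : g ^ 2 * (g * D k - D g * k - (K + 2) * h ^ 2) = 0 := by
      linear_combination g ^ 2 * M' - 2 * g * D g * M + g * h * E3' - (g * D h + h * D g) * E3 
        + h ^ 2 * E1' - 2 * h * D h * E1 + h ^ 2 * E2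
    exact sub_eq_zero.1 ((mul_eq_zero.1 this).resolve_left hg2)
  refine ⟨hB2, ?_⟩
  have hB2' := congrArg D hB2
  simp only [map_add, map_sub, Derivation.leibniz, Derivation.leibniz_pow, smul_eq_mul, hK, D2,
    map_zero, nsmul_eq_mul, Nat.cast_ofNat, pow_one, Nat.add_one_sub_one, mul_zero, add_zero] at hB2'
  have : g * (D (D k) * h - 2 * (D k * D h) + k * D (D h) + (2 * c - 2 * z) * (k * h)) = 0 := by
    linear_combination h * hB2' + k * E3 - 2 * D h * hB2
  exact (mul_eq_zero.1 this).resolve_left hg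

noncomputable section

abbrev PR := MvPolynomial (Fin 5) ℝ

/-- variables: `z, φ, ψ, φ', ψ'` -/
def pD0 : Derivation ℝ PR PR := MvPolynomial.mkDerivation ℝ
  ![1, MvPolynomial.X 3, MvPolynomial.X 4,
    -(2 * (MvPolynomial.X 1 * MvPolynomial.X 2) - 2 * MvPolynomial.X 0) * MvPolynomial.X 1,
    -(2 * (MvPolynomial.X 1 * MvPolynomial.X 2) - 2 * MvPolynomial.X 0) * MvPolynomial.X 2]

def pD : Derivation ℤ PR PR := pD0.restrictScalars ℤ

theorem pD_X (i : Fin 5) : pD (MvPolynomial.X i) = (![1, MvPolynomial.X 3, MvPolynomial.X 4,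
    -(2 * (MvPolynomial.X 1 * MvPolynomial.X 2) - 2 * MvPolynomial.X 0) * MvPolynomial.X 1,
    -(2 * (MvPolynomial.X 1 * MvPolynomial.X 2) - 2 * MvPolynomial.X 0) * MvPolynomial.X 2] : Fin 5 → PR) i :=
  MvPolynomial.mkDerivation_X _ _ _

theorem pD_C (r : ℝ) : pD (MvPolynomial.C r) = 0 := pD0.map_algebraMap r

def pa : ℕ → PR
  | 0 => MvPolynomial.X 2
  | (n + 1) => pD (pa n) + MvPolynomial.X 1 * ∑ k : Fin n, pa k * pa (n - 1 - k)
decreasing_by all_goals omega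

theorem pa_zero : pa 0 = MvPolynomial.X 2 := by rw [pa]

theorem pa_succ (n : ℕ) : pa (n + 1) = pD (pa n) + MvPolynomial.X 1 * 
    ∑ k ∈ Finset.range n, pa k * pa (n - 1 - k) := by
  rw [pa, Fin.sum_univ_eq_sum_range (fun k => pa k * pa (n - 1 - k)) n]

def pT : ℕ → PR
  | 0 => MvPolynomial.X 1
  | (n + 1) => Matrix.det (Matrix.of fun i j : Fin n => pa (i + j))

def pk : PR := MvPolynomial.X 1 * MvPolynomial.X 4 - MvPolynomial.X 3 * MvPolynomial.X 2

theorem pk_ne (n : ℕ) : pk + 2 * (n : PR) ≠ 0 := by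
  intro h
  have := congrArg (MvPolynomial.eval ![0, 1, 0, 0, 1]) h
  simp [pk] at this
  have h2 : (0 : ℝ) ≤ n := n.cast_nonneg
  linarith

theorem pD_pk : pD pk = 0 := by
  simp only [pk, map_sub, Derivation.leibniz, pD_X, smul_eq_mul]
  simp
  ring

theorem pT_toda (n : ℕ) (hn : n ≠ 0 → pT n ≠ 0) :
    pT n * pT (n + 2) = pT (n + 1) * pD (pD (pT (n + 1))) - pD (pT (n + 1)) ^ 2
      + MvPolynomial.X 1 * MvPolynomial.X 2 * pT (n + 1) ^ 2 := by
  rcases n with _ | n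
  · simp [pT, pa_zero]
  · have := my_toda pD pa (MvPolynomial.X 1) (fun n => eq_sub_of_add_eq (pa_succ n).symm) (fun n => pT (n + 1))
      (fun n => rfl) n (hn (by omega))
    rw [pa_zero] at this
    exact this

theorem pT_main (n : ℕ) : pT (n + 1) ≠ 0 ∧
    (pT n * pD (pT (n + 2)) - pD (pT n) * pT (n + 2) = (pk + 2 * (n : PR)) * pT (n + 1) ^ 2) ∧
    (pD (pD (pT (n + 1))) * pT n - 2 * (pD (pT (n + 1)) * pD (pT n)) + pT (n + 1) * pD (pD (pT n))
     + (2 * (MvPolynomial.X 1 * MvPolynomial.X 2) - 2 * MvPolynomial.X 0) * (pT (n + 1) * pT n) = 0) ∧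
    (pD (pD (pT (n + 2))) * pT (n + 1) - 2 * (pD (pT (n + 2)) * pD (pT (n + 1)))
      + pT (n + 2) * pD (pD (pT (n + 1)))
     + (2 * (MvPolynomial.X 1 * MvPolynomial.X 2) - 2 * MvPolynomial.X 0) * (pT (n + 2) * pT (n + 1)) = 0) := by
  induction n with
  | zero =>
    refine ⟨by simp [pT], ?_, ?_, ?_⟩
    · simp [pT, pa_zero, pD_X, pk]
    · simp [pT, pD_X]
      ring
    · simp [pT, pa_zero, pD_X]
      ring
  | succ n ih =>
    obtain ⟨h1, h2, h3, h4⟩ := ih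
    have hne : pT (n + 2) ≠ 0 := by
      intro h0
      rw [h0] at h2
      simp only [map_zero, mul_zero, sub_zero] at h2
      exact mul_ne_zero (pk_ne n) (pow_ne_zero 2 h1) h2.symm
    have hTn : n ≠ 0 → pT n ≠ 0 := by
      intro hn h0
      rw [h0] at h2
      simp only [map_zero, zero_mul, sub_zero] at h2
      exact mul_ne_zero (pk_ne n) (pow_ne_zero 2 h1) h2.symm
    have E1 := pT_toda n hTn
    have M := pT_toda (n + 1) (fun _ => h1)
    have hK : pD (pk + 2 * (n : PR)) = 0 := by
      have D2 : pD (2 : PR) = 0 := by simpa using pD.map_natCast 2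
      rw [map_add, pD_pk, Derivation.leibniz, D2, Derivation.map_natCast]
      simp
    obtain ⟨r1, r2⟩ := my_step pD (pT n) (pT (n + 1)) (pT (n + 2)) (pT (n + 3))
      (MvPolynomial.X 1 * MvPolynomial.X 2) (MvPolynomial.X 0) (pk + 2 * (n : PR)) h1
      (pD_X 0) hK E1 h2 h4 M
    refine ⟨hne, ?_, h4, r2⟩
    refine r1.trans ?_
    push_cast
    ring

theorem ev_deriv (v : ℝ → Fin 5 → ℝ) (z : ℝ)
    (hv : ∀ i, HasDerivAt (fun x => v x i) (MvPolynomial.eval (v z) (pD (MvPolynomial.X i))) z) (P : PR) :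
    HasDerivAt (fun x => MvPolynomial.eval (v x) P) (MvPolynomial.eval (v z) (pD P)) z := by
  induction P using MvPolynomial.induction_on with
  | C r => 
    simp only [MvPolynomial.eval_C, pD_C, map_zero]
    exact hasDerivAt_const z r
  | add p q hp hq =>
    simp only [map_add]
    exact hp.add hq
  | mul_X p i hp =>
    have := hp.mul (hv i)
    simp only [map_mul, Derivation.leibniz, map_add, smul_eq_mul, MvPolynomial.eval_X]
    refine this.congr_deriv ?_
    ring

theorem my_fin (I : Set ℝ) (hI : IsOpen I) (β : ℝ) (Φ Ψ Φ1 Ψ1 W : ℝ → ℝ)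
    (h1 : ∀ z ∈ I, HasDerivAt Φ (Φ1 z) z) (h2 : ∀ z ∈ I, HasDerivAt Ψ (Ψ1 z) z)
    (h3 : ∀ z ∈ I, HasDerivAt Φ1 (-(2 * (Φ z * Ψ z) - 2 * z) * Φ z) z)
    (h4 : ∀ z ∈ I, HasDerivAt Ψ1 (-(2 * (Φ z * Ψ z) - 2 * z) * Ψ z) z)
    (h5 : ∀ z ∈ I, Φ z * Ψ1 z - Φ1 z * Ψ z = 2 * β)
    (hW : ∀ z ∈ I, W z = 2 * (Φ z * Ψ z)) :
    ∀ z ∈ I,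
      2 * W z * deriv (deriv W) z - (deriv W z) ^ 2 + 4 * (W z) ^ 3
        - 8 * z * (W z) ^ 2 + 16 * β ^ 2 = 0 := by
  have hd : ∀ z ∈ I, deriv W z = 2 * (Φ1 z * Ψ z + Φ z * Ψ1 z) := by
    intro z hz
    have he : W =ᶠ[nhds z] fun z => 2 * (Φ z * Ψ z) :=
      Filter.eventuallyEq_of_mem (hI.mem_nhds hz) hW
    rw [he.deriv_eq]
    exact (((h1 z hz).mul (h2 z hz)).const_mul 2).deriv
  intro z hz
  have hdd : deriv (deriv W) z = 2 * ((-(2 * (Φ z * Ψ z) - 2 * z) * Φ z) * Ψ z + Φ1 z * Ψ1 z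
      + (Φ1 z * Ψ1 z + Φ z * (-(2 * (Φ z * Ψ z) - 2 * z) * Ψ z))) := by
    have he : deriv W =ᶠ[nhds z] fun z => 2 * (Φ1 z * Ψ z + Φ z * Ψ1 z) :=
      Filter.eventuallyEq_of_mem (hI.mem_nhds hz) hd
    rw [he.deriv_eq]
    exact ((((h3 z hz).mul (h2 z hz)).add ((h1 z hz).mul (h4 z hz))).const_mul 2).deriv
  rw [hdd, hd z hz, hW z hz]
  have := h5 z hz
  have hb : β = (Φ z * Ψ1 z - Φ1 z * Ψ z) / 2 := by linarith
  rw [hb]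
  ring

theorem my_quot (f f1 f2 g g1 g2 h c z : ℝ) (hg : g ≠ 0) (b1 : f * h = g * g2 - g1 ^ 2 + c * g ^ 2)
    (b3 : g2 * f - 2 * (g1 * f1) + g * f2 + (2 * c - 2 * z) * (g * f) = 0) :
    ((f1 * g1 + g * f2 - (f * g2 + g1 * f1)) * g ^ 2 - (f1 * g - f * g1) * (2 * (g * g1))) / (g ^ 2) ^ 2
     = -(2 * (f / g * (h / g)) - 2 * z) * (f / g) := by
  have e : -(2 * (f / g * (h / g)) - 2 * z) * (f / g) = (-(2 * (f * h)) * f * g + 2 * z * f * g ^ 3) / (g ^ 2) ^ 2 := by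
    field_simp
    ring
  rw [e]
  congr 1
  linear_combination g ^ 2 * b3 + 2 * f * g * b1

theorem my_core (I : Set ℝ) (hI : IsOpen I) (α : ℝ) (φ0 ψ0 p q : ℝ → ℝ)
    (h1 : ∀ z ∈ I, HasDerivAt φ0 (p z) z) (h2 : ∀ z ∈ I, HasDerivAt ψ0 (q z) z)
    (h3 : ∀ z ∈ I, HasDerivAt p (-(2 * (φ0 z * ψ0 z) - 2 * z) * φ0 z) z)
    (h4 : ∀ z ∈ I, HasDerivAt q (-(2 * (φ0 z * ψ0 z) - 2 * z) * ψ0 z) z)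
    (h5 : ∀ z ∈ I, φ0 z * q z - p z * ψ0 z = 2 * α)
    (ψ : ℕ → ℝ → ℝ) (hψ0 : ∀ z ∈ I, ψ 0 z = ψ0 z)
    (hψ : ∀ n : ℕ, ∀ z ∈ I, ψ (n + 1) z =
      deriv (ψ n) z + φ0 z * ∑ k ∈ Finset.range n, ψ k z * ψ (n - 1 - k) z)
    (N : ℕ) (τ : ℝ → ℝ)
    (hτ : ∀ z ∈ I, τ z = Matrix.det (Matrix.of fun i j : Fin N => ψ ((i : ℕ) + (j : ℕ)) z))
    (hτ_ne : ∀ z ∈ I, τ z ≠ 0) (W : ℝ → ℝ)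
    (hW : ∀ z ∈ I, W z = 2 * (φ0 z * ψ0 z) +
      2 * (deriv (deriv τ) z * τ z - (deriv τ z) ^ 2) / (τ z) ^ 2) :
    ∀ z ∈ I,
      2 * W z * deriv (deriv W) z - (deriv W z) ^ 2 + 4 * (W z) ^ 3
        - 8 * z * (W z) ^ 2 + 16 * (α + N) ^ 2 = 0 := by
  let v : ℝ → Fin 5 → ℝ := fun z => ![z, φ0 z, ψ0 z, p z, q z]
  have hv : ∀ z ∈ I, ∀ P : PR, HasDerivAt (fun x => MvPolynomial.eval (v x) P)
      (MvPolynomial.eval (v z) (pD P)) z := by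
    intro z hz P
    apply ev_deriv
    intro i
    rw [pD_X]
    fin_cases i
    · simpa [v] using hasDerivAt_id' z
    · simpa [v] using h1 z hz
    · simpa [v] using h2 z hz
    · simpa [v] using h3 z hz
    · simpa [v] using h4 z hz
  have hnh : ∀ z ∈ I, I ∈ nhds z := fun z hz => hI.mem_nhds hz
  have hd : ∀ (u : ℝ → ℝ) (P : PR), (∀ z ∈ I, u z = MvPolynomial.eval (v z) P) →
      ∀ z ∈ I, deriv u z = MvPolynomial.eval (v z) (pD P) := by
    intro u P hu z hz
    have he : u =ᶠ[nhds z] fun x => MvPolynomial.eval (v x) P :=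
      Filter.eventuallyEq_of_mem (hnh z hz) hu
    rw [he.deriv_eq]
    exact (hv z hz P).deriv
  have hψe : ∀ n : ℕ, ∀ z ∈ I, ψ n z = MvPolynomial.eval (v z) (pa n) := by
    intro n
    induction n using Nat.strong_induction_on with
    | _ n ih =>
      intro z hz
      rcases n with _ | n
      · rw [hψ0 z hz, pa_zero]; simp [v]
      · rw [hψ n z hz, pa_succ, hd _ _ (ih n (by omega)) z hz, map_add, map_mul, map_sum]
        congr 2
        · simp [v]
        · apply Finset.sum_congr rfl
          intro k hk
          have := Finset.mem_range.1 hk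
          rw [map_mul, ih k (by omega) z hz, ih (n - 1 - k) (by omega) z hz]
  have hτe : ∀ z ∈ I, τ z = MvPolynomial.eval (v z) (pT (N + 1)) := by
    intro z hz
    rw [hτ z hz, pT, RingHom.map_det]
    congr 1
    ext i j
    simp [hψe _ z hz]
  have hτd := hd _ _ hτe
  have hτdd := hd _ _ hτd
  obtain ⟨hne, b2, b3, b4⟩ := pT_main N
  have b1 : pT N * pT (N + 2) = pT (N + 1) * pD (pD (pT (N + 1))) - pD (pT (N + 1)) ^ 2
      + MvPolynomial.X 1 * MvPolynomial.X 2 * pT (N + 1) ^ 2 := by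
    apply pT_toda
    intro hN
    obtain ⟨M, rfl⟩ := Nat.exists_eq_succ_of_ne_zero hN
    exact (pT_main M).1
  set F : PR := pT N
  set G : PR := pT (N + 1)
  set H : PR := pT (N + 2)
  have hG : ∀ z ∈ I, MvPolynomial.eval (v z) G ≠ 0 := fun z hz => by rw [← hτe z hz]; exact hτ_ne z hz
  have e0 : ∀ z, MvPolynomial.eval (v z) (MvPolynomial.X 0) = z := fun z => by simp [v]
  have e1 : ∀ z, MvPolynomial.eval (v z) (MvPolynomial.X 1) = φ0 z := fun z => by simp [v]
  have e2 : ∀ z, MvPolynomial.eval (v z) (MvPolynomial.X 2) = ψ0 z := fun z => by simp [v]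
  have e3 : ∀ z, MvPolynomial.eval (v z) (MvPolynomial.X 3) = p z := fun z => by simp [v]
  have e4 : ∀ z, MvPolynomial.eval (v z) (MvPolynomial.X 4) = q z := fun z => by simp [v]
  have e5 : ∀ z ∈ I, MvPolynomial.eval (v z) pk = 2 * α := fun z hz => by
    rw [pk, map_sub, map_mul, map_mul, e1, e2, e3, e4, h5 z hz]
  have hq : ∀ z ∈ I, ∀ P Q : PR, MvPolynomial.eval (v z) Q ≠ 0 →
      HasDerivAt (fun x => MvPolynomial.eval (v x) P / MvPolynomial.eval (v x) Q)
      (MvPolynomial.eval (v z) (pD P * Q - P * pD Q) / MvPolynomial.eval (v z) (Q ^ 2)) z := by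
    intro z hz P Q hQ
    refine ((hv z hz P).div (hv z hz Q) hQ).congr_deriv ?_
    simp
  have hG2 : ∀ z ∈ I, MvPolynomial.eval (v z) (G ^ 2) ≠ 0 := fun z hz => by
    rw [map_pow]; exact pow_ne_zero _ (hG z hz)
  apply my_fin I hI (α + N) (fun z => MvPolynomial.eval (v z) F / MvPolynomial.eval (v z) G)
    (fun z => MvPolynomial.eval (v z) H / MvPolynomial.eval (v z) G) _ _ W
    (fun z hz => hq z hz F G (hG z hz)) (fun z hz => hq z hz H G (hG z hz))
  · intro z hz
    refine (hq z hz _ _ (hG2 z hz)).congr_deriv ?_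
    have b1 := congrArg (MvPolynomial.eval (v z)) b1
    have b3 := congrArg (MvPolynomial.eval (v z)) b3
    have hg := hG z hz
    simp only [map_sub, map_add, map_mul, map_pow, map_ofNat, Derivation.leibniz, Derivation.leibniz_pow,
      smul_eq_mul, nsmul_eq_mul, Nat.cast_ofNat, Nat.add_one_sub_one, pow_one, e0, e1, e2, map_zero] at b1 b3 ⊢
    refine (my_quot (MvPolynomial.eval (v z) F) (MvPolynomial.eval (v z) (pD F)) (MvPolynomial.eval (v z) (pD (pD F))) (MvPolynomial.eval (v z) G) (MvPolynomial.eval (v z) (pD G)) (MvPolynomial.eval (v z) (pD (pD G))) (MvPolynomial.eval (v z) H)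
      (φ0 z * ψ0 z) z hg (by linear_combination b1) (by linear_combination b3)).trans (by ring)
  · intro z hz
    refine (hq z hz _ _ (hG2 z hz)).congr_deriv ?_
    have b1 := congrArg (MvPolynomial.eval (v z)) b1
    have b3 := congrArg (MvPolynomial.eval (v z)) b4
    have hg := hG z hz
    simp only [map_sub, map_add, map_mul, map_pow, map_ofNat, Derivation.leibniz, Derivation.leibniz_pow,
      smul_eq_mul, nsmul_eq_mul, Nat.cast_ofNat, Nat.add_one_sub_one, pow_one, e0, e1, e2, map_zero] at b1 b3 ⊢
    refine (my_quot (MvPolynomial.eval (v z) H) (MvPolynomial.eval (v z) (pD H)) (MvPolynomial.eval (v z) (pD (pD H))) (MvPolynomial.eval (v z) G) (MvPolynomial.eval (v z) (pD G)) (MvPolynomial.eval (v z) (pD (pD G))) (MvPolynomial.eval (v z) F)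
      (φ0 z * ψ0 z) z hg (by linear_combination b1) (by linear_combination b3)).trans (by ring)
  · intro z hz
    have b2 := congrArg (MvPolynomial.eval (v z)) b2
    have hg := hG z hz
    simp only [map_sub, map_add, map_mul, map_pow, map_ofNat, map_natCast, e5 z hz] at b2 ⊢
    field_simp
    linear_combination MvPolynomial.eval (v z) G * b2
  · intro z hz
    rw [hW z hz, hτdd z hz, hτd z hz, hτe z hz]
    have b1 := congrArg (MvPolynomial.eval (v z)) b1
    have hg := hG z hz
    simp only [map_sub, map_add, map_mul, map_pow, e1, e2] at b1
    field_simp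
    linear_combination -b1

end

/-- If `w` solves P_XXXIV[α] on an open interval `I` and `ψ0` is a nowhere-vanishing
smooth function solving (L1) and (L2), then for any integer `N` with `τ_N` nowhere zero
on `I`, the function `W = w + 2 (log τ_N)''` solves P_XXXIV[α + N] on `I`. -/
theorem painleve34_determinant_formula
    (I : Set ℝ) (hIopen : IsOpen I) (hIconn : I.OrdConnected)
    (α : ℝ) (w ψ0 : ℝ → ℝ)
    (hw_smooth : ContDiffOn ℝ (⊤ : ℕ∞) w I)
    (hw_P34 : ∀ z ∈ I,
      2 * w z * deriv (deriv w) z - (deriv w z) ^ 2 + 4 * (w z) ^ 3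
        - 8 * z * (w z) ^ 2 + 16 * α ^ 2 = 0)
    (hψ0_smooth : ContDiffOn ℝ (⊤ : ℕ∞) ψ0 I)
    (hψ0_ne : ∀ z ∈ I, ψ0 z ≠ 0)
    (hL1 : ∀ z ∈ I, 2 * w z * deriv ψ0 z - deriv w z * ψ0 z - 4 * α * ψ0 z = 0)
    (hL2 : ∀ z ∈ I, deriv (deriv ψ0) z + (w z - 2 * z) * ψ0 z = 0)
    (ψ φ : ℕ → ℝ → ℝ)
    (hψ_zero : ψ 0 = ψ0)
    (hφ_zero : ∀ z ∈ I, φ 0 z = w z / (2 * ψ0 z))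
    (hψ_rec : ∀ n : ℕ, ∀ z ∈ I, ψ (n + 1) z =
      deriv (ψ n) z + (w z / (2 * ψ0 z)) *
        ∑ k ∈ Finset.range n, ψ k z * ψ (n - 1 - k) z)
    (hφ_rec : ∀ n : ℕ, ∀ z ∈ I, φ (n + 1) z =
      deriv (φ n) z + ψ0 z *
        ∑ k ∈ Finset.range n, φ k z * φ (n - 1 - k) z)
    (N : ℤ)
    (hτ_ne : ∀ z ∈ I, hankelTau ψ φ N z ≠ 0)
    (W : ℝ → ℝ)
    (hW : W = fun z => w z +
      2 * (deriv (deriv (hankelTau ψ φ N)) z * hankelTau ψ φ N z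
        - (deriv (hankelTau ψ φ N) z) ^ 2) / (hankelTau ψ φ N z) ^ 2) :
    ∀ z ∈ I,
      2 * W z * deriv (deriv W) z - (deriv W z) ^ 2 + 4 * (W z) ^ 3
        - 8 * z * (W z) ^ 2 + 16 * (α + (N : ℝ)) ^ 2 = 0 := by
  have hnh : ∀ z ∈ I, I ∈ nhds z := fun z hz => hIopen.mem_nhds hz
  have key : ∀ u : ℝ → ℝ, ContDiffOn ℝ (⊤ : ℕ∞) u I → ∀ z ∈ I, HasDerivAt u (deriv u z) z ∧
      HasDerivAt (deriv u) (deriv (deriv u) z) z := by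
    intro u hu z hz
    have h2 : ContDiffOn ℝ (1 + 1) u I := by
      have := contDiffOn_infty.1 hu 2
      rw [one_add_one_eq_two]
      exact_mod_cast this
    have hc : ContDiffAt ℝ (1 + 1) u z := h2.contDiffAt (hnh z hz)
    refine ⟨(hc.differentiableAt (by norm_num)).hasDerivAt, ?_⟩
    have h1 : ContDiffOn ℝ 1 (deriv u) I :=
      ((contDiffOn_succ_iff_deriv_of_isOpen (n := 1) hIopen).1
        h2).2.2
    exact ((h1.contDiffAt (hnh z hz)).differentiableAt (by norm_num)).hasDerivAt
  let φ0 : ℝ → ℝ := fun z => w z / (2 * ψ0 z)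
  have hφ0_smooth : ContDiffOn ℝ (⊤ : ℕ∞) φ0 I :=
    hw_smooth.div (contDiffOn_const.mul hψ0_smooth)
      (fun z hz => mul_ne_zero two_ne_zero (hψ0_ne z hz))
  have hw : ∀ z ∈ I, w z = 2 * (φ0 z * ψ0 z) := by
    intro z hz
    have := hψ0_ne z hz
    simp only [φ0]
    field_simp
  have hwr : ∀ z ∈ I, φ0 z * deriv ψ0 z - deriv φ0 z * ψ0 z = 2 * α := by
    intro z hz
    have he : w =ᶠ[nhds z] fun z => 2 * (φ0 z * ψ0 z) :=
      Filter.eventuallyEq_of_mem (hnh z hz) hw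
    have hd : deriv w z = 2 * (deriv φ0 z * ψ0 z + φ0 z * deriv ψ0 z) := by
      rw [he.deriv_eq]
      exact (((key φ0 hφ0_smooth z hz).1.mul (key ψ0 hψ0_smooth z hz).1).const_mul 2).deriv
    have h := hL1 z hz
    rw [hd, hw z hz] at h
    apply mul_left_cancel₀ (mul_ne_zero two_ne_zero (hψ0_ne z hz))
    linear_combination h
  have h4 : ∀ z ∈ I, deriv (deriv ψ0) z = -(2 * (φ0 z * ψ0 z) - 2 * z) * ψ0 z := by
    intro z hz
    rw [← hw z hz]
    linear_combination hL2 z hz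
  have h3 : ∀ z ∈ I, deriv (deriv φ0) z = -(2 * (φ0 z * ψ0 z) - 2 * z) * φ0 z := by
    intro z hz
    have he : (fun z => φ0 z * deriv ψ0 z - deriv φ0 z * ψ0 z) =ᶠ[nhds z] fun _ => 2 * α :=
      Filter.eventuallyEq_of_mem (hnh z hz) hwr
    have h := he.deriv_eq
    rw [deriv_const] at h
    have h' := (((key φ0 hφ0_smooth z hz).1.mul (key ψ0 hψ0_smooth z hz).2).sub
      ((key φ0 hφ0_smooth z hz).2.mul (key ψ0 hψ0_smooth z hz).1)).deriv
    have h'' := h'.symm.trans h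
    rw [h4 z hz] at h''
    apply mul_left_cancel₀ (hψ0_ne z hz)
    linear_combination -h''
  have H1 := fun z hz => (key φ0 hφ0_smooth z hz).1
  have H2 := fun z hz => (key ψ0 hψ0_smooth z hz).1
  have H3 : ∀ z ∈ I, HasDerivAt (deriv φ0) (-(2 * (φ0 z * ψ0 z) - 2 * z) * φ0 z) z :=
    fun z hz => by rw [← h3 z hz]; exact (key φ0 hφ0_smooth z hz).2
  have H4 : ∀ z ∈ I, HasDerivAt (deriv ψ0) (-(2 * (φ0 z * ψ0 z) - 2 * z) * ψ0 z) z :=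
    fun z hz => by rw [← h4 z hz]; exact (key ψ0 hψ0_smooth z hz).2
  by_cases hN : 0 ≤ N
  · have := my_core I hIopen α φ0 ψ0 (deriv φ0) (deriv ψ0) H1 H2 H3 H4 hwr ψ
      (fun z _ => by rw [hψ_zero]) hψ_rec N.toNat (hankelTau ψ φ N)
      (fun z _ => by simp only [hankelTau]; rw [if_pos hN]) hτ_ne W
      (fun z hz => by rw [hW, ← hw z hz])
    have hc : ((N.toNat : ℕ) : ℝ) = (N : ℝ) := by
      exact_mod_cast congrArg (Int.cast : ℤ → ℝ) (Int.toNat_of_nonneg hN)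
    rw [hc] at this
    exact this
  · have := my_core I hIopen (-α) ψ0 φ0 (deriv ψ0) (deriv φ0) H2 H1
      (fun z hz => by rw [mul_comm (ψ0 z) (φ0 z)]; exact H4 z hz)
      (fun z hz => by rw [mul_comm (ψ0 z) (φ0 z)]; exact H3 z hz)
      (fun z hz => by linear_combination -(hwr z hz)) φ
      hφ_zero hφ_rec (-N).toNat (hankelTau ψ φ N)
      (fun z _ => by simp only [hankelTau]; rw [if_neg hN]) hτ_ne W
      (fun z hz => by rw [hW, mul_comm (ψ0 z) (φ0 z), ← hw z hz])
    have hc : (((-N).toNat : ℕ) : ℝ) = -(N : ℝ) := by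
      have h0 : 0 ≤ -N := by omega
      exact_mod_cast congrArg (Int.cast : ℤ → ℝ) (Int.toNat_of_nonneg h0)
    rw [hc] at this
    intro z hz
    linear_combination this z hz
end

section
/- Let w be a smooth solution of P_XXXIV[α] on an open interval I ⊆ ℝ, and let ψ_0 be a nowhere-vanishing smooth function on I satisfying both (L1) and (L2) with this w and parameter α. Define the sequences ψ_n, φ_n and the Hankel determinants τ_N from w and ψ_0. For an integer N such that τ_N and τ_{N+1} are nowhere zero on I, set Ψ_N = τ_{N+1}/τ_N and W = w + 2(τ_N''·τ_N − (τ_N')²)/τ_N². Then on I the function Ψ_N satisfies 2W·Ψ_N' − W'·Ψ_N − 4(α+N)·Ψ_N = 0 and Ψ_N'' + (W − 2z)·Ψ_N = 0. -/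
set_option linter.all false
namespace P34
open Matrix

section alg
variable {R : Type*} [CommRing R] [Algebra ℝ R] (D : Derivation ℝ R R)

lemma deriv_prod {ι : Type*} [DecidableEq ι] (s : Finset ι) (f : ι → R) :
    D (∏ i ∈ s, f i) = ∑ i ∈ s, (∏ j ∈ s.erase i, f j) * D (f i) := by
  induction s using Finset.induction_on with
  | empty => simp
  | insert a s ha ih =>
    rw [Finset.prod_insert ha, Finset.sum_insert ha, Finset.erase_insert ha, D.leibniz, ih]
    simp only [smul_eq_mul]
    rw [add_comm, Finset.mul_sum]
    congr 1
    · apply Finset.sum_congr rfl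
      intro i hi
      have hia : a ≠ i := fun h => ha (h ▸ hi)
      rw [Finset.erase_insert_of_ne hia, Finset.prod_insert (by simp [ha])]
      ring

lemma deriv_det {ι : Type*} [DecidableEq ι] [Fintype ι] (A : Matrix ι ι R) :
    D A.det = (A.adjugate * A.map D).trace := by
  have h1 : (A.adjugate * A.map D).trace =
      ∑ i, (A.updateCol i (fun k => D (A k i))).det := by
    simp only [Matrix.trace, Matrix.diag]
    apply Finset.sum_congr rfl
    intro i _
    rw [← cramer_apply, cramer_eq_adjugate_mulVec]
    rfl
  rw [h1, det_apply, map_sum]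
  simp only [det_apply]
  rw [Finset.sum_comm]
  apply Finset.sum_congr rfl
  intro σ _
  rw [← Finset.smul_sum]
  have h2 : D (Equiv.Perm.sign σ • ∏ i, A (σ i) i) =
      Equiv.Perm.sign σ • D (∏ i, A (σ i) i) := by
    rcases Int.units_eq_one_or (Equiv.Perm.sign σ) with h | h <;> rw [h] <;> simp
  rw [h2, deriv_prod]
  congr 1
  apply Finset.sum_congr rfl
  intro i _
  rw [← Finset.mul_prod_erase Finset.univ _ (Finset.mem_univ i), mul_comm]
  congr 1
  · simp
  · apply Finset.prod_congr rfl
    intro j hj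
    rw [updateCol_ne (Finset.ne_of_mem_erase hj)]

variable {n : ℕ}

lemma trace_adj_row (A : Matrix (Fin (n + 1)) (Fin (n + 1)) R) (v : Fin (n + 1) → R)
    (S : Matrix (Fin (n + 1)) (Fin (n + 1)) R)
    (h1 : ∀ i : Fin n, ∀ j, S i.castSucc j = A i.succ j)
    (h2 : ∀ j, S (Fin.last n) j = v j) :
    (A.adjugate * S).trace = (A.updateRow (Fin.last n) v).det := by
  set Λ : Matrix (Fin (n + 1)) (Fin (n + 1)) R := of fun i k => if (k : ℕ) = i + 1 then 1 else 0
  set E : Matrix (Fin (n + 1)) (Fin (n + 1)) R := of fun i k => if i = Fin.last n then v k else 0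
  have hS : S = Λ * A + E := by
    ext i j
    rw [Matrix.add_apply, Matrix.mul_apply]
    induction i using Fin.lastCases with
    | last =>
      rw [h2, Finset.sum_eq_zero]
      · simp [E]
      · intro k _
        have : (k : ℕ) ≠ n + 1 := by omega
        simp [Λ, this]
    | cast i =>
      rw [h1, Finset.sum_eq_single i.succ]
      · simp [Λ, E, Fin.castSucc_ne_last]
      · intro k _ hk
        have : (k : ℕ) ≠ i + 1 := fun h => hk (Fin.ext (by simpa using h))
        simp [Λ, this]
      · simp
  have hΛ : (A.adjugate * (Λ * A)).trace = 0 := by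
    rw [Matrix.trace_mul_comm, Matrix.mul_assoc, mul_adjugate]
    simp [Matrix.trace, Λ]
  have hE : (A.adjugate * E).trace = (A.updateRow (Fin.last n) v).det := by
    rw [← cramer_transpose_apply, cramer_eq_adjugate_mulVec, ← adjugate_transpose]
    simp [Matrix.trace, Matrix.mul_apply, E, mulVec, dotProduct]
  rw [hS, Matrix.mul_add, Matrix.trace_add, hΛ, hE, zero_add]

/-- the convolution recursion -/
lemma conv_split (f : ℕ → R) (i c : ℕ) :
    ∑ k ∈ Finset.range (i + c), f k * f (i + c - 1 - k) =
      ∑ m ∈ Finset.range i, f (i - 1 - m) * f (m + c) +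
      ∑ m ∈ Finset.range c, f (i + m) * f (c - 1 - m) := by
  rw [Finset.sum_range_add]
  congr 1
  · rw [← Finset.sum_range_reflect]
    apply Finset.sum_congr rfl
    intro m hm
    rw [Finset.mem_range] at hm
    congr 2
    omega
  · apply Finset.sum_congr rfl
    intro m hm
    rw [Finset.mem_range] at hm
    congr 2
    omega

lemma deriv_minor (q : R) (f : ℕ → R)
    (hf : ∀ n, f (n + 1) = D (f n) + q * ∑ k ∈ Finset.range n, f k * f (n - 1 - k))
    (c : Fin (n + 1) → ℕ) (K E : Matrix (Fin (n + 1)) (Fin (n + 1)) R)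
    (hK : K.trace = 0)
    (hKE : ∀ i j : Fin (n + 1), ∑ m ∈ Finset.range (c j), f (i + m) * f (c j - 1 - m) =
      ∑ m : Fin (n + 1), f (i + c m) * K m j + E i j) :
    D (of fun i j : Fin (n + 1) => f (i + c j)).det =
      ((of fun i j : Fin (n + 1) => f (i + c j)).updateRow (Fin.last n)
        (fun j => f (n + 1 + c j))).det
      - q * ((of fun i j : Fin (n + 1) => f (i + c j)).adjugate * E).trace := by
  set A : Matrix (Fin (n + 1)) (Fin (n + 1)) R := of fun i j => f (i + c j) with hA
  set S : Matrix (Fin (n + 1)) (Fin (n + 1)) R := of fun i j => f (i + 1 + c j) with hS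
  set L : Matrix (Fin (n + 1)) (Fin (n + 1)) R :=
    of fun i m => if (m : ℕ) < i then f (i - 1 - m) else 0 with hL
  have key : A.map D = S - q • (L * A + A * K + E) := by
    ext i j
    have h1 := hf (i + c j)
    rw [conv_split, hKE] at h1
    have h2 : ∑ m ∈ Finset.range i, f (i - 1 - m) * f (m + c j) = (L * A) i j := by
      rw [Matrix.mul_apply]
      simp only [hL, hA, of_apply, ite_mul, zero_mul]
      rw [Fin.sum_univ_eq_sum_range
        (fun m => if m < (i : ℕ) then f (i - 1 - m) * f (m + c j) else 0) (n + 1),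
        ← Finset.sum_filter]
      apply Finset.sum_congr _ (fun _ _ => rfl)
      ext m
      simp only [Finset.mem_range, Finset.mem_filter]
      have := i.2
      omega
    have h3 : ∑ m : Fin (n + 1), f (i + c m) * K m j = (A * K) i j := by
      rw [Matrix.mul_apply]; rfl
    rw [h2, h3] at h1
    simp only [Matrix.map_apply, Matrix.sub_apply, Matrix.smul_apply, Matrix.add_apply,
      smul_eq_mul]
    rw [hA, of_apply, hS, of_apply, ← hA, show (i : ℕ) + 1 + c j = i + c j + 1 by ring, h1]
    ring
  rw [deriv_det, key, Matrix.mul_sub, Matrix.trace_sub, Matrix.mul_smul, Matrix.trace_smul,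
    Matrix.mul_add, Matrix.mul_add, Matrix.trace_add, Matrix.trace_add]
  have e1 : (A.adjugate * (L * A)).trace = 0 := by
    rw [Matrix.trace_mul_comm, Matrix.mul_assoc, mul_adjugate]
    simp [Matrix.trace, L]
  have e2 : (A.adjugate * (A * K)).trace = 0 := by
    rw [← Matrix.mul_assoc, adjugate_mul]
    simp [hK]
  rw [e1, e2, trace_adj_row A (fun j => f (n + 1 + c j)) S]
  · simp
  · intro i j; simp [hS, hA]
  · intro j; simp [hS]

def rr (n e : ℕ) (i : Fin (n + 1)) : ℕ := if (i : ℕ) < n then i else n + e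

def Mn (f : ℕ → R) (n a b : ℕ) : R :=
  (of fun i j : Fin (n + 1) => f (rr n a i + rr n b j)).det

def tau (f : ℕ → R) (n : ℕ) : R := (of fun i j : Fin n => f (i + j)).det

lemma rr_zero (n : ℕ) (i : Fin (n + 1)) : rr n 0 i = i := by
  unfold rr; have := i.2; split_ifs <;> omega

lemma Mn00 (f : ℕ → R) (n : ℕ) : Mn f n 0 0 = tau f (n + 1) := by
  simp [Mn, tau, rr_zero]

lemma Mn_symm (f : ℕ → R) (n a b : ℕ) : Mn f n a b = Mn f n b a := by
  rw [Mn, ← det_transpose, Mn]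
  congr 1
  ext i j
  simp [add_comm]

lemma updateRow_Mn (f : ℕ → R) (n b : ℕ) :
    ((of fun i j : Fin (n + 1) => f (i + rr n b j)).updateRow (Fin.last n)
        (fun j => f (n + 1 + rr n b j))).det = Mn f n 1 b := by
  rw [Mn]
  congr 1
  ext i j
  induction i using Fin.lastCases with
  | last => simp [rr]
  | cast i => simp [rr, Fin.castSucc_ne_last]

lemma D_Mn00 (q : R) (f : ℕ → R)
    (hf : ∀ n, f (n + 1) = D (f n) + q * ∑ k ∈ Finset.range n, f k * f (n - 1 - k)) (n : ℕ) :
    D (Mn f n 0 0) = Mn f n 0 1 := by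
  have := deriv_minor D q f hf (rr n 0)
    (of fun m j => if (m : ℕ) < j then f (j - 1 - m) else 0) 0 (by simp [Matrix.trace]) (by
      intro i j
      simp only [rr_zero, of_apply, mul_ite, mul_zero, Matrix.zero_apply, add_zero]
      rw [Fin.sum_univ_eq_sum_range
        (fun m => if m < (j : ℕ) then f (i + m) * f (j - 1 - m) else 0) (n + 1),
        ← Finset.sum_filter]
      apply Finset.sum_congr _ (fun _ _ => rfl)
      ext m
      simp only [Finset.mem_range, Finset.mem_filter]
      have := j.2
      omega)
  rw [updateRow_Mn] at this
  rw [Mn_symm f n 0 1, ← sub_zero (Mn f n 1 0)]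
  simpa [Mn, rr_zero] using this

lemma D_Mn01 (q : R) (f : ℕ → R)
    (hf : ∀ n, f (n + 1) = D (f n) + q * ∑ k ∈ Finset.range n, f k * f (n - 1 - k)) (n : ℕ) :
    D (Mn f n 0 1) = Mn f n 1 1 - q * f 0 * Mn f n 0 0 := by
  have := deriv_minor D q f hf (rr n 1)
    (of fun m j => if (m : ℕ) < j then f (rr n 1 j - 1 - m) else 0)
    (of fun i j => if j = Fin.last n then f 0 * f (i + n) else 0) (by simp [Matrix.trace]) (by
      intro i j
      rw [Fin.sum_univ_castSucc]
      have h0 : ∀ m : Fin n, rr n 1 m.castSucc = m := by intro m; simp [rr]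
      have h00 : ¬ n < (j : ℕ) := by omega
      simp only [h0, of_apply, Fin.val_castSucc, Fin.val_last, h00, if_false, mul_zero, add_zero]
      simp only [mul_ite, mul_zero]
      rw [Fin.sum_univ_eq_sum_range
        (fun m => if m < (j : ℕ) then f (i + m) * f (rr n 1 j - 1 - m) else 0) n,
        ← Finset.sum_filter]
      induction j using Fin.lastCases with
      | last =>
        have h1 : rr n 1 (Fin.last n) = n + 1 := by simp [rr]
        rw [h1, Finset.sum_range_succ]
        simp only [if_true]
        congr 1
        · apply Finset.sum_congr _ (fun _ _ => rfl)
          ext m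
          simp
        · simp [mul_comm]
      | cast j =>
        rw [h0]
        simp only [Fin.castSucc_ne_last, if_false, add_zero]
        apply Finset.sum_congr _ (fun _ _ => rfl)
        ext m
        simp only [Finset.mem_range, Finset.mem_filter, Fin.val_castSucc]
        have := j.2
        omega)
  rw [updateRow_Mn] at this
  have hM : Mn f n 0 1 = (of fun i j : Fin (n + 1) => f (i + rr n 1 j)).det := by
    simp [Mn, rr_zero]
  rw [hM, this]
  congr 1
  rw [mul_assoc]
  congr 1
  have h5 : Mn f n 0 0 = ((of fun i j : Fin (n + 1) => f (i + rr n 1 j)).updateCol (Fin.last n)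
      (fun i => f (i + n))).det := by
    rw [Mn]
    congr 1
    ext i j
    induction j using Fin.lastCases with
    | last => simp [rr_zero]
    | cast j =>
      rw [updateCol_ne (Fin.castSucc_ne_last j), of_apply, of_apply, rr_zero, rr_zero]
      simp [rr]
  rw [h5, ← cramer_apply, cramer_eq_adjugate_mulVec]
  simp only [Matrix.trace, Matrix.mul_apply, mulVec, dotProduct, diag, of_apply, mul_ite, mul_zero]
  rw [Finset.sum_eq_single (Fin.last n)]
  · simp only [if_true]
    rw [Finset.mul_sum]
    apply Finset.sum_congr rfl
    intro i _
    ring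
  · intro i _ hi
    simp [hi]
  · simp

end alg

section dom

lemma jacobi_field {K : Type*} [Field K] {n : ℕ} (A : Matrix (Fin n) (Fin n) K)
    (B : Matrix (Fin n) (Fin 2) K) (C : Matrix (Fin 2) (Fin n) K) (E : Matrix (Fin 2) (Fin 2) K)
    (hA : A.det ≠ 0) (d : Fin 2 → Fin 2 → K)
    (hd : ∀ a b, d a b = (fromBlocks A (of fun i (_ : Fin 1) => B i b)
      (of fun (_ : Fin 1) j => C a j) (of fun (_ _ : Fin 1) => E a b)).det) :
    (fromBlocks A B C E).det * A.det = d 0 0 * d 1 1 - d 0 1 * d 1 0 := by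
  have : Invertible A := A.invertibleOfIsUnitDet (isUnit_iff_ne_zero.mpr hA)
  have h : ∀ a b, d a b = A.det * (E - C * ⅟A * B) a b := by
    intro a b
    rw [hd, det_fromBlocks₁₁, det_fin_one]
    congr 1
  rw [det_fromBlocks₁₁, det_fin_two, h, h, h, h]
  ring

variable {R : Type*} [CommRing R] [IsDomain R]

lemma jacobi_hankel (f : ℕ → R) (n : ℕ) (h : tau f n ≠ 0) :
    tau f (n + 2) * tau f n = Mn f n 0 0 * Mn f n 1 1 - Mn f n 0 1 * Mn f n 1 0 := by
  set K := FractionRing R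
  have hinj : Function.Injective (algebraMap R K) := IsFractionRing.injective R K
  apply hinj
  set g : ℕ → K := fun n => algebraMap R K (f n)
  have ht : ∀ n, algebraMap R K (tau f n) = tau g n := by
    intro n; rw [tau, RingHom.map_det]; rfl
  have hM : ∀ a b, algebraMap R K (Mn f n a b) = Mn g n a b := by
    intro a b; rw [Mn, RingHom.map_det]; rfl
  have hne : tau g n ≠ 0 := by
    rw [← ht]; exact fun h' => h (hinj (by rw [h', map_zero]))
  simp only [map_mul, map_sub, ht, hM]
  have key := jacobi_field (of fun i j : Fin n => g (i + j))
    (of fun (i : Fin n) (b : Fin 2) => g (i + (n + b)))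
    (of fun (a : Fin 2) (j : Fin n) => g ((n + a) + j))
    (of fun (a b : Fin 2) => g ((n + a) + (n + b))) hne (fun a b => Mn g n a b) (by
      intro a b
      simp only [Mn]
      rw [← det_submatrix_equiv_self finSumFinEquiv]
      congr 1
      ext i j
      rcases i with i | i <;> rcases j with j | j <;> simp [rr])
  have h2 : tau g (n + 2) = (fromBlocks (of fun i j : Fin n => g (i + j))
    (of fun (i : Fin n) (b : Fin 2) => g (i + (n + b)))
    (of fun (a : Fin 2) (j : Fin n) => g ((n + a) + j))
    (of fun (a b : Fin 2) => g ((n + a) + (n + b)))).det := by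
      rw [tau, ← det_submatrix_equiv_self finSumFinEquiv]
      congr 1
      ext i j
      rcases i with i | i <;> rcases j with j | j <;> simp
  rw [h2]
  exact key

variable [Algebra ℝ R] (D : Derivation ℝ R R)

lemma toda (q : R) (f : ℕ → R)
    (hf : ∀ n, f (n + 1) = D (f n) + q * ∑ k ∈ Finset.range n, f k * f (n - 1 - k)) (n : ℕ)
    (h : tau f n ≠ 0) :
    tau f (n + 2) * tau f n = D (D (tau f (n + 1))) * tau f (n + 1) - (D (tau f (n + 1))) ^ 2
      + f 0 * q * tau f (n + 1) ^ 2 := by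
  have h1 := D_Mn00 D q f hf n
  have h2 := D_Mn01 D q f hf n
  have h3 := jacobi_hankel f n h
  rw [Mn_symm f n 1 0] at h3
  rw [h3, ← Mn00, h1, h2]
  ring

/-- The Toda, first-order and second-order bilinear relations for consecutive `a, b, c`. -/
structure Bil (z s κ a b c : R) : Prop where
  t : c * a = D (D b) * b - (D b) ^ 2 + s * b ^ 2
  l1 : D c * a - c * D a = κ * b ^ 2
  l2 : D (D c) * b - 2 * (D c * D b) + c * D (D b) + (2 * s - 2 * z) * (c * b) = 0

lemma D_two : D (2 : R) = 0 := by
  have := D.map_natCast 2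
  simpa using this

lemma bil_step {z s κ a b c d : R} (hz : D z = 1) (hκ : D κ = 0) (hb : b ≠ 0) (hc : c ≠ 0)
    (h : Bil D z s κ a b c)
    (ht : d * b = D (D c) * c - (D c) ^ 2 + s * c ^ 2) : Bil D z s (κ + 2) b c d := by
  have two : D (2 : R) = 0 := D_two D
  have t1 := congrArg D h.t
  have t2 := congrArg D ht
  have t3 := congrArg D h.l2
  simp only [D.leibniz, map_add, map_sub, pow_two, smul_eq_mul, two, hz, map_zero] at t1 t2 t3
  have l1 : D d * b - d * D b = (κ + 2) * c ^ 2 := by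
    have hb2 : b ^ 2 ≠ 0 := pow_ne_zero _ hb
    apply mul_left_cancel₀ hb2
    linear_combination b ^ 2 * t2 - 2 * b * D b * ht + b * c * t3 - (b * D c + c * D b) * h.l2 +
      c ^ 2 * h.l1 + c ^ 2 * t1 - 2 * c * D c * h.t
  refine ⟨ht, l1, ?_⟩
  have l1' := congrArg D l1
  simp only [D.leibniz, map_add, map_sub, pow_two, smul_eq_mul, two, hκ] at l1'
  apply mul_left_cancel₀ hb
  linear_combination d * h.l2 + c * l1' - 2 * D c * l1

lemma bil_all [CharZero R] {z p q : R} (hz : D z = 1)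
    (hp : D (D p) = (2 * z - 2 * (p * q)) * p) (hq : D (D q) = (2 * z - 2 * (p * q)) * q)
    (hκ : ∀ n : ℕ, D p * q - p * D q + 2 * (n : R) ≠ 0)
    (f : ℕ → R) (hf0 : f 0 = p)
    (hf : ∀ n, f (n + 1) = D (f n) + q * ∑ k ∈ Finset.range n, f k * f (n - 1 - k)) (n : ℕ) :
    tau f n ≠ 0 ∧ tau f (n + 1) ≠ 0 ∧ Bil D z (p * q) (D p * q - p * D q + 2 * (n : R))
      (if n = 0 then q else tau f (n - 1)) (tau f n) (tau f (n + 1)) := by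
  have two : D (2 : R) = 0 := D_two D
  have t0 : tau f 0 = 1 := by simp [tau]
  have t1 : tau f 1 = p := by simp [tau, hf0]
  have ne : ∀ n : ℕ, tau f n ≠ 0 → Bil D z (p * q) (D p * q - p * D q + 2 * (n : R))
      (if n = 0 then q else tau f (n - 1)) (tau f n) (tau f (n + 1)) → tau f (n + 1) ≠ 0 := by
    intro n h0 hB h1
    have := hB.l1
    rw [h1, map_zero, zero_mul, zero_mul, sub_zero] at this
    exact mul_ne_zero (hκ n) (pow_ne_zero 2 h0) this.symm
  induction n with
  | zero =>
    have hB : Bil D z (p * q) (D p * q - p * D q + 2 * ((0 : ℕ) : R))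
      (if 0 = 0 then q else tau f (0 - 1)) (tau f 0) (tau f (0 + 1)) := by
      rw [zero_add, t0, t1, if_pos rfl]
      refine ⟨by simp, by simp, ?_⟩
      rw [hp]; simp; ring
    exact ⟨by rw [t0]; exact one_ne_zero, ne 0 (by rw [t0]; exact one_ne_zero) hB, hB⟩
  | succ n ih =>
    obtain ⟨h0, h1, hB⟩ := ih
    have hB' : Bil D z (p * q) (D p * q - p * D q + 2 * ((n + 1 : ℕ) : R))
      (if n + 1 = 0 then q else tau f (n + 1 - 1)) (tau f (n + 1)) (tau f (n + 1 + 1)) := by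
      rw [if_neg (by omega), Nat.add_sub_cancel]
      have := bil_step D hz (by
        simp only [D.leibniz, map_add, map_sub, smul_eq_mul, two, hp, hq, D.map_natCast]
        ring) h0 h1 hB (d := tau f (n + 2)) (by rw [toda D q f hf n h0, hf0])
      convert this using 1
      push_cast
      ring
    exact ⟨h1, ne _ h1 hB', hB'⟩

end dom

section ana
open MvPolynomial Filter Topology

noncomputable def seq {R : Type*} [CommRing R] [Algebra ℝ R] (D : Derivation ℝ R R) (p q : R) :
    ℕ → R
  | 0 => p
  | n + 1 => D (seq D p q n) + q * ∑ k : Fin n, seq D p q k * seq D p q (n - 1 - k)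
  termination_by n => n
  decreasing_by all_goals omega

lemma seq_zero {R : Type*} [CommRing R] [Algebra ℝ R] (D : Derivation ℝ R R) (p q : R) :
    seq D p q 0 = p := by rw [seq]

lemma seq_succ {R : Type*} [CommRing R] [Algebra ℝ R] (D : Derivation ℝ R R) (p q : R) (n : ℕ) :
    seq D p q (n + 1) = D (seq D p q n) +
      q * ∑ k ∈ Finset.range n, seq D p q k * seq D p q (n - 1 - k) := by
  rw [seq, Fin.sum_univ_eq_sum_range (fun k => seq D p q k * seq D p q (n - 1 - k)) n]

abbrev PR := MvPolynomial (Fin 5) ℝ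

noncomputable def dd : Derivation ℝ PR PR :=
  mkDerivation ℝ ![1, X 2, (2 * X 0 - 2 * (X 1 * X 3)) * X 1, X 4,
    (2 * X 0 - 2 * (X 1 * X 3)) * X 3]

lemma dd0 : dd (X 0) = 1 := by simp [dd, mkDerivation_X]
lemma dd1 : dd (X 1) = X 2 := by simp [dd, mkDerivation_X]
lemma dd2 : dd (X 2) = (2 * X 0 - 2 * (X 1 * X 3)) * X 1 := by simp [dd, mkDerivation_X]
lemma dd3 : dd (X 3) = X 4 := by simp [dd, mkDerivation_X]
lemma dd4 : dd (X 4) = (2 * X 0 - 2 * (X 1 * X 3)) * X 3 := by simp [dd, mkDerivation_X]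

noncomputable def TT (N : ℤ) : PR :=
  if 0 ≤ N then tau (seq dd (X 1) (X 3)) N.toNat else tau (seq dd (X 3) (X 1)) (-N).toNat

lemma TT_nat (n : ℕ) : TT n = tau (seq dd (X 1) (X 3)) n := by simp [TT]

lemma TT_neg (n : ℕ) : TT (-n) = tau (seq dd (X 3) (X 1)) n := by
  rcases n with _ | n
  · simp [TT, tau]
  · rw [TT, if_neg (by push_cast; omega)]
    congr 1

lemma bil_TT (N : ℤ) : Bil dd (X 0) (X 1 * X 3) (X 2 * X 3 - X 1 * X 4 + 2 * (N : PR))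
    (TT (N - 1)) (TT N) (TT (N + 1)) := by
  have hpos := bil_all dd (z := X 0) (p := X 1) (q := X 3) dd0 (by rw [dd1, dd2])
    (by rw [dd3, dd4]) (by
      intro n h
      have := congrArg (eval (![0, 0, 1, 1, 0] : Fin 5 → ℝ)) h
      simp [dd1, dd3] at this
      norm_cast at this; omega) _ (seq_zero dd _ _) (seq_succ dd _ _)
  have hneg := bil_all dd (z := X 0) (p := X 3) (q := X 1) dd0
    (by rw [dd3, dd4, mul_comm (X 1)])
    (by rw [dd1, dd2, mul_comm (X 1)]) (by
      intro n h
      have := congrArg (eval (![0, 1, 0, 0, 1] : Fin 5 → ℝ)) h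
      simp [dd1, dd3] at this
      norm_cast at this; omega) _ (seq_zero dd _ _) (seq_succ dd _ _)
  simp only [dd1, dd3] at hpos hneg
  rcases le_or_gt 0 N with h | h
  · obtain ⟨n, rfl⟩ := Int.eq_ofNat_of_zero_le h
    have hB := (hpos n).2.2
    rw [← TT_nat n, ← TT_nat (n + 1)] at hB
    have : (if n = 0 then X 3 else tau (seq dd (X 1) (X 3)) (n - 1)) = TT ((n : ℤ) - 1) := by
      rcases n with _ | n
      · have := TT_neg 1
        simp only [Nat.cast_one] at this
        simp [this, tau, seq_zero]
      · simp [TT_nat]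
    rw [this] at hB
    simpa using hB
  · obtain ⟨n, hn⟩ := Int.eq_ofNat_of_zero_le (show 0 ≤ -N - 1 by omega)
    have e0 : TT N = tau (seq dd (X 3) (X 1)) (n + 1) := by
      rw [← TT_neg]; congr 1; push_cast; omega
    have e1 : TT (N + 1) = tau (seq dd (X 3) (X 1)) n := by
      rw [← TT_neg]; congr 1; omega
    have e2 : TT (N - 1) = tau (seq dd (X 3) (X 1)) (n + 1 + 1) := by
      rw [← TT_neg]; congr 1; push_cast; omega
    have hB := (hneg n).2.2
    have hB' := (hneg (n + 1)).2.2
    rw [if_neg (by omega), Nat.add_sub_cancel] at hB'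
    rw [e0, e1, e2]
    have hN : (N : PR) = -((n + 1 : ℕ) : PR) := by
      rw [show N = -((n + 1 : ℕ) : ℤ) by push_cast; omega]
      push_cast; ring
    rw [hN]
    refine ⟨?_, ?_, ?_⟩
    · linear_combination hB'.t
    · linear_combination -hB'.l1
    · linear_combination hB.l2

section ev
variable (p p1 q q1 : ℝ → ℝ)

noncomputable def ev (z : ℝ) : PR →ₐ[ℝ] ℝ := aeval ![z, p z, p1 z, q z, q1 z]

variable {p p1 q q1} {I : Set ℝ}

lemma ev_hasDeriv {z : ℝ} (hp : HasDerivAt p (p1 z) z)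
    (hp1 : HasDerivAt p1 ((2 * z - 2 * (p z * q z)) * p z) z) (hq : HasDerivAt q (q1 z) z)
    (hq1 : HasDerivAt q1 ((2 * z - 2 * (p z * q z)) * q z) z) (f : PR) :
    HasDerivAt (fun x => ev p p1 q q1 x f) (ev p p1 q q1 z (dd f)) z := by
  induction f using MvPolynomial.induction_on with
  | C a =>
    have h1 : ∀ x, ev p p1 q q1 x (C a) = a := fun x => by simp [ev]
    have h2 : dd (C a) = 0 := by simp [dd]
    simp only [h1, h2, map_zero]
    exact hasDerivAt_const _ _
  | add f g hf hg =>
    simp only [map_add]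
    exact hf.add hg
  | mul_X f i hf =>
    have hX : HasDerivAt (fun x => ev p p1 q q1 x (X i)) (ev p p1 q q1 z (dd (X i))) z := by
      fin_cases i
      · simpa [ev, dd, mkDerivation_X] using hasDerivAt_id' z
      · simpa [ev, dd, mkDerivation_X] using hp
      · simpa [ev, dd, mkDerivation_X] using hp1
      · simpa [ev, dd, mkDerivation_X] using hq
      · simpa [ev, dd, mkDerivation_X] using hq1
    have := hf.fun_mul hX
    simp only [map_mul, Derivation.leibniz, smul_eq_mul, map_add]
    exact this.congr_deriv (by ring)

lemma ev_seq (hI : IsOpen I) (hev : ∀ z ∈ I, ∀ f : PR,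
      HasDerivAt (fun x => ev p p1 q q1 x f) (ev p p1 q q1 z (dd f)) z)
    (P Q : PR) (g : ℕ → ℝ → ℝ) (h0 : ∀ z ∈ I, g 0 z = ev p p1 q q1 z P)
    (h : ∀ n : ℕ, ∀ z ∈ I, g (n + 1) z = deriv (g n) z + ev p p1 q q1 z Q *
        ∑ k ∈ Finset.range n, g k z * g (n - 1 - k) z) (n : ℕ) :
    ∀ z ∈ I, g n z = ev p p1 q q1 z (seq dd P Q n) := by
  induction n using Nat.strong_induction_on with
  | _ n ih =>
    rcases n with _ | n
    · simpa [seq_zero] using h0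
    · intro z hz
      rw [h n z hz, seq_succ, map_add, map_mul, map_sum]
      congr 1
      · have : g n =ᶠ[𝓝 z] fun x => ev p p1 q q1 x (seq dd P Q n) := by
          filter_upwards [hI.mem_nhds hz] with x hx using ih n (by omega) x hx
        rw [this.deriv_eq, (hev z hz _).deriv]
      · congr 1
        apply Finset.sum_congr rfl
        intro k hk
        rw [Finset.mem_range] at hk
        rw [map_mul, ih k (by omega) z hz, ih (n - 1 - k) (by omega) z hz]

lemma ev_tau {z : ℝ} (F : ℕ → PR) (g : ℕ → ℝ → ℝ) (h : ∀ n, g n z = ev p p1 q q1 z (F n))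
    (n : ℕ) : Matrix.det (Matrix.of fun i j : Fin n => g ((i : ℕ) + (j : ℕ)) z) =
      ev p p1 q q1 z (tau F n) := by
  rw [tau, AlgHom.map_det]
  congr 1
  ext i j
  simp [h]

end ev
end ana
end P34

/-- If `w` solves P_XXXIV[α] on `I` and `ψ0` is a nowhere-vanishing smooth solution of
(L1) and (L2), then for any integer `N` with `τ_N`, `τ_{N+1}` nowhere zero on `I`, the
function `Ψ_N = τ_{N+1}/τ_N` satisfies the linear equations (L1) and (L2) with
`W = w + 2 (log τ_N)''` and parameter `α + N`. -/
theorem painleve34_wave_function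
    (I : Set ℝ) (hIopen : IsOpen I) (hIconn : I.OrdConnected)
    (α : ℝ) (w ψ0 : ℝ → ℝ)
    (hw_smooth : ContDiffOn ℝ (⊤ : ℕ∞) w I)
    (hw_P34 : ∀ z ∈ I,
      2 * w z * deriv (deriv w) z - (deriv w z) ^ 2 + 4 * (w z) ^ 3
        - 8 * z * (w z) ^ 2 + 16 * α ^ 2 = 0)
    (hψ0_smooth : ContDiffOn ℝ (⊤ : ℕ∞) ψ0 I)
    (hψ0_ne : ∀ z ∈ I, ψ0 z ≠ 0)
    (hL1 : ∀ z ∈ I, 2 * w z * deriv ψ0 z - deriv w z * ψ0 z - 4 * α * ψ0 z = 0)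
    (hL2 : ∀ z ∈ I, deriv (deriv ψ0) z + (w z - 2 * z) * ψ0 z = 0)
    (ψ φ : ℕ → ℝ → ℝ)
    (hψ_zero : ψ 0 = ψ0)
    (hφ_zero : ∀ z ∈ I, φ 0 z = w z / (2 * ψ0 z))
    (hψ_rec : ∀ n : ℕ, ∀ z ∈ I, ψ (n + 1) z =
      deriv (ψ n) z + (w z / (2 * ψ0 z)) *
        ∑ k ∈ Finset.range n, ψ k z * ψ (n - 1 - k) z)
    (hφ_rec : ∀ n : ℕ, ∀ z ∈ I, φ (n + 1) z =
      deriv (φ n) z + ψ0 z *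
        ∑ k ∈ Finset.range n, φ k z * φ (n - 1 - k) z)
    (N : ℤ)
    (hτN_ne : ∀ z ∈ I, hankelTau ψ φ N z ≠ 0)
    (hτN1_ne : ∀ z ∈ I, hankelTau ψ φ (N + 1) z ≠ 0)
    (Ψ W : ℝ → ℝ)
    (hΨ : Ψ = fun z => hankelTau ψ φ (N + 1) z / hankelTau ψ φ N z)
    (hW : W = fun z => w z +
      2 * (deriv (deriv (hankelTau ψ φ N)) z * hankelTau ψ φ N z
        - (deriv (hankelTau ψ φ N) z) ^ 2) / (hankelTau ψ φ N z) ^ 2) :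
    ∀ z ∈ I,
      (2 * W z * deriv Ψ z - deriv W z * Ψ z - 4 * (α + (N : ℝ)) * Ψ z = 0) ∧
      (deriv (deriv Ψ) z + (W z - 2 * z) * Ψ z = 0) := by
  classical
  set p1 : ℝ → ℝ := deriv ψ0 with hp1
  set q : ℝ → ℝ := fun z => w z / (2 * ψ0 z) with hq
  set q1 : ℝ → ℝ := deriv q with hq1
  have hq_smooth : ContDiffOn ℝ (⊤ : ℕ∞) q I :=
    hw_smooth.div (contDiffOn_const.mul hψ0_smooth)
      (fun z hz => mul_ne_zero two_ne_zero (hψ0_ne z hz))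
  have hdiff : ∀ f : ℝ → ℝ, ContDiffOn ℝ (⊤ : ℕ∞) f I → ∀ z ∈ I, HasDerivAt f (deriv f z) z :=
    fun f hf z hz => ((hf.differentiableOn (by simp)).differentiableAt
      (hIopen.mem_nhds hz)).hasDerivAt
  have hsm : ∀ f : ℝ → ℝ, ContDiffOn ℝ (⊤ : ℕ∞) f I → ContDiffOn ℝ (⊤ : ℕ∞) (deriv f) I :=
    fun f hf => hf.deriv_of_isOpen hIopen (by simp)
  have hDp := hdiff ψ0 hψ0_smooth
  have hDp1 := hdiff _ (hsm ψ0 hψ0_smooth)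
  have hDq := hdiff q hq_smooth
  have hDq1 := hdiff _ (hsm q hq_smooth)
  have hwpq : ∀ z ∈ I, w z = 2 * (ψ0 z * q z) := by
    intro z hz
    have := hψ0_ne z hz
    simp only [hq]
    field_simp
  have hκ : ∀ z ∈ I, p1 z * q z - ψ0 z * q1 z = 2 * α := by
    intro z hz
    have h0 := hψ0_ne z hz
    have h1 : w =ᶠ[nhds z] fun x => 2 * (ψ0 x * q x) := by
      filter_upwards [hIopen.mem_nhds hz] with x hx using hwpq x hx
    have h2 : deriv w z = 2 * (p1 z * q z + ψ0 z * q1 z) := by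
      rw [h1.deriv_eq]
      exact (((hDp z hz).fun_mul (hDq z hz)).const_mul 2).deriv
    have h3 := hL1 z hz
    rw [h2, hwpq z hz] at h3
    apply mul_left_cancel₀ h0
    linear_combination h3 / 2
  have hpp : ∀ z ∈ I, deriv p1 z = (2 * z - 2 * (ψ0 z * q z)) * ψ0 z := by
    intro z hz
    have := hL2 z hz
    rw [hwpq z hz] at this
    linear_combination this
  have hqq : ∀ z ∈ I, deriv q1 z = (2 * z - 2 * (ψ0 z * q z)) * q z := by
    intro z hz
    have h0 := hψ0_ne z hz
    have h1 : (fun x => p1 x * q x - ψ0 x * q1 x) =ᶠ[nhds z] fun _ => 2 * α := by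
      filter_upwards [hIopen.mem_nhds hz] with x hx using hκ x hx
    have h2 := h1.deriv_eq
    rw [deriv_const, (((hDp1 z hz).fun_mul (hDq z hz)).fun_sub ((hDp z hz).fun_mul (hDq1 z hz))).deriv] at h2
    have h3 := hpp z hz
    apply mul_left_cancel₀ h0
    simp only [← hp1, ← hq1] at h2
    rw [h3] at h2
    linear_combination -h2
  have hev : ∀ z ∈ I, ∀ f : P34.PR,
      HasDerivAt (fun x => P34.ev ψ0 p1 q q1 x f) (P34.ev ψ0 p1 q q1 z (P34.dd f)) z :=
    fun z hz f => P34.ev_hasDeriv (hDp z hz) (hpp z hz ▸ hDp1 z hz) (hDq z hz)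
      (hqq z hz ▸ hDq1 z hz) f
  have hψs := P34.ev_seq hIopen hev (MvPolynomial.X 1) (MvPolynomial.X 3) ψ
    (by intro z _; simp [P34.ev, hψ_zero])
    (by intro n z hz; rw [hψ_rec n z hz]; simp [P34.ev, hq])
  have hφs := P34.ev_seq hIopen hev (MvPolynomial.X 3) (MvPolynomial.X 1) φ
    (by intro z hz; rw [hφ_zero z hz]; simp [P34.ev, hq])
    (by intro n z hz; rw [hφ_rec n z hz]; simp [P34.ev])
  have hT : ∀ k : ℤ, ∀ z ∈ I, hankelTau ψ φ k z = P34.ev ψ0 p1 q q1 z (P34.TT k) := by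
    intro k z hz
    unfold hankelTau P34.TT
    split_ifs
    · exact P34.ev_tau _ _ (fun n => hψs n z hz) _
    · exact P34.ev_tau _ _ (fun n => hφs n z hz) _
  have hB := P34.bil_TT N
  set A := P34.TT (N - 1)
  set B := P34.TT N
  set C := P34.TT (N + 1)
  set e := P34.ev ψ0 p1 q q1 with he
  have hTB : ∀ z ∈ I, hankelTau ψ φ N z = e z B := hT N
  have hTC : ∀ z ∈ I, hankelTau ψ φ (N + 1) z = e z C := hT (N + 1)
  have hb : ∀ z ∈ I, e z B ≠ 0 := fun z hz => hT N z hz ▸ hτN_ne z hz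
  have hd1 : ∀ z ∈ I, deriv (hankelTau ψ φ N) z = e z (P34.dd B) := by
    intro z hz
    have : hankelTau ψ φ N =ᶠ[nhds z] fun x => e x B := by
      filter_upwards [hIopen.mem_nhds hz] with x hx using hT N x hx
    rw [this.deriv_eq, (hev z hz B).deriv]
  have hd2 : ∀ z ∈ I, deriv (deriv (hankelTau ψ φ N)) z = e z (P34.dd (P34.dd B)) := by
    intro z hz
    have : deriv (hankelTau ψ φ N) =ᶠ[nhds z] fun x => e x (P34.dd B) := by
      filter_upwards [hIopen.mem_nhds hz] with x hx using hd1 x hx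
    rw [this.deriv_eq, (hev z hz _).deriv]
  have ev0 : ∀ z, e z (MvPolynomial.X 0) = z := by intro z; simp [he, P34.ev]
  have ev1 : ∀ z, e z (MvPolynomial.X 1) = ψ0 z := by intro z; simp [he, P34.ev]
  have ev2 : ∀ z, e z (MvPolynomial.X 2) = p1 z := by intro z; simp [he, P34.ev]
  have ev3 : ∀ z, e z (MvPolynomial.X 3) = q z := by intro z; simp [he, P34.ev]
  have ev4 : ∀ z, e z (MvPolynomial.X 4) = q1 z := by intro z; simp [he, P34.ev]
  have e2 : ∀ z, e z 2 = 2 := fun z => map_ofNat (e z) 2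
  have ht : ∀ z, e z C * e z A = e z (P34.dd (P34.dd B)) * e z B - (e z (P34.dd B)) ^ 2
      + ψ0 z * q z * e z B ^ 2 := by
    intro z
    have := congrArg (e z) hB.t
    simpa [ev1, ev3] using this
  have hl1 : ∀ z ∈ I, e z (P34.dd C) * e z A - e z C * e z (P34.dd A) =
      (2 * α + 2 * N) * e z B ^ 2 := by
    intro z hz
    have := congrArg (e z) hB.l1
    rw [← hκ z hz]
    simpa [ev1, ev2, ev3, ev4, e2] using this
  have hl2 : ∀ z, e z (P34.dd (P34.dd C)) * e z B - 2 * (e z (P34.dd C) * e z (P34.dd B))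
      + e z C * e z (P34.dd (P34.dd B))
      + (2 * (ψ0 z * q z) - 2 * z) * (e z C * e z B) = 0 := by
    intro z
    have := congrArg (e z) hB.l2
    simpa [ev0, ev1, ev3, e2] using this
  have hWI : ∀ z ∈ I, W z = 2 * (e z C * e z A) / (e z B) ^ 2 := by
    intro z hz
    have := hb z hz
    rw [hW]
    simp only
    rw [hd2 z hz, hd1 z hz, hTB z hz, hwpq z hz, ht]
    field_simp
    ring
  have hΨI : ∀ z ∈ I, Ψ z = e z C / e z B := by
    intro z hz
    rw [hΨ]
    simp only
    rw [hTB z hz, hTC z hz]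
  have hdΨ : ∀ z ∈ I, deriv Ψ z =
      (e z (P34.dd C) * e z B - e z C * e z (P34.dd B)) / (e z B) ^ 2 := by
    intro z hz
    have : Ψ =ᶠ[nhds z] fun x => e x C / e x B := by
      filter_upwards [hIopen.mem_nhds hz] with x hx using hΨI x hx
    rw [this.deriv_eq]
    exact ((hev z hz C).fun_div (hev z hz B) (hb z hz)).deriv
  intro z hz
  have hbz := hb z hz
  have eqΨ : deriv Ψ =ᶠ[nhds z] fun x =>
      (e x (P34.dd C) * e x B - e x C * e x (P34.dd B)) / (e x B) ^ 2 := by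
    filter_upwards [hIopen.mem_nhds hz] with x hx using hdΨ x hx
  have hddΨ := eqΨ.deriv_eq.trans
    (((((hev z hz (P34.dd C)).fun_mul (hev z hz B)).fun_sub
      ((hev z hz C).fun_mul (hev z hz (P34.dd B)))).fun_div ((hev z hz B).fun_pow 2)
      (pow_ne_zero 2 hbz))).deriv
  have eqW : W =ᶠ[nhds z] fun x => 2 * (e x C * e x A) / (e x B) ^ 2 := by
    filter_upwards [hIopen.mem_nhds hz] with x hx using hWI x hx
  have hdW := eqW.deriv_eq.trans
    ((((hev z hz C).fun_mul (hev z hz A)).const_mul 2).fun_div ((hev z hz B).fun_pow 2)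
      (pow_ne_zero 2 hbz)).deriv
  have h1 := hl1 z hz
  have h2 := hl2 z
  have h3 := ht z
  constructor
  · rw [hdW, hdΨ z hz, hΨI z hz, hWI z hz]
    generalize e z (P34.dd A) = a' at *
    generalize e z (P34.dd C) = c' at *
    generalize e z (P34.dd B) = b' at *
    generalize e z A = a at *
    generalize e z B = b at *
    generalize e z C = c at *
    field_simp
    push_cast
    linear_combination (2 * c * b ^ 2) * h1
  · rw [hddΨ, hΨI z hz, hWI z hz, h3]
    generalize e z (P34.dd (P34.dd C)) = c'' at *
    generalize e z (P34.dd (P34.dd B)) = b'' at *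
    generalize e z (P34.dd C) = c' at *
    generalize e z (P34.dd B) = b' at *
    generalize e z B = b at *
    generalize e z C = c at *
    field_simp
    push_cast
    linear_combination b ^ 2 * h2
end

section
/- Let u be a smooth solution of P_II[α] on an open interval I ⊆ ℝ, and let ψ_0 be a nowhere-vanishing smooth function on I with ψ_0' = u·ψ_0. Set w = −u' − u² + 2z, and define the sequences ψ_n, φ_n and the Hankel determinants τ_N from w and ψ_0. Then for every integer N such that τ_N and τ_{N+1} are nowhere zero on I, the function U = τ_{N+1}'/τ_{N+1} − τ_N'/τ_N (that is, U = (log(τ_{N+1}/τ_N))') is a solution of P_II[α+N] on I. -/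
set_option maxHeartbeats 1000000

namespace P2
open Matrix

lemma derivation_prod {R ι : Type*} [CommRing R] [DecidableEq ι] (D : Derivation ℤ R R)
    (s : Finset ι) (f : ι → R) :
    D (∏ i ∈ s, f i) = ∑ i ∈ s, ∏ j ∈ s, (if j = i then D (f j) else f j) := by
  induction s using Finset.induction_on with
  | empty => simp
  | insert a s ha ih =>
    rw [Finset.prod_insert ha, Derivation.leibniz, ih, Finset.sum_insert ha,
      Finset.prod_insert ha]
    simp only [if_true, smul_eq_mul]
    have h1 : ∏ j ∈ s, (if j = a then D (f j) else f j) = ∏ j ∈ s, f j := by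
      refine Finset.prod_congr rfl fun j hj => ?_
      rw [if_neg]; rintro rfl; exact ha hj
    have h2 : ∀ i ∈ s, ∏ j ∈ insert a s, (if j = i then D (f j) else f j)
        = f a * ∏ j ∈ s, (if j = i then D (f j) else f j) := by
      intro i hi
      rw [Finset.prod_insert ha, if_neg]; rintro rfl; exact ha hi
    rw [h1, Finset.sum_congr rfl h2, Finset.mul_sum]
    ring

lemma derivation_det {R ι : Type*} [CommRing R] [DecidableEq ι] [Fintype ι]
    (D : Derivation ℤ R R) (M : Matrix ι ι R) :
    D M.det = trace (adjugate M * M.map D) := by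
  have h1 : D M.det = ∑ i, (M.updateCol i (fun k => D (M k i))).det := by
    simp only [det_apply, map_sum]
    rw [Finset.sum_comm]
    refine Finset.sum_congr rfl fun σ _ => ?_
    rw [← Finset.smul_sum]
    have : D (Equiv.Perm.sign σ • ∏ i, M (σ i) i) = Equiv.Perm.sign σ • D (∏ i, M (σ i) i) := by
      rcases Int.units_eq_one_or (Equiv.Perm.sign σ) with h | h <;> simp [h]
    rw [this, derivation_prod]
    congr 1
    refine Finset.sum_congr rfl fun i _ => Finset.prod_congr rfl fun j _ => ?_
    rw [updateCol_apply]
    split_ifs with h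
    · subst h; rfl
    · rfl
  rw [h1]
  simp only [trace, diag_apply]
  refine Finset.sum_congr rfl fun i _ => ?_
  rw [← cramer_apply, cramer_eq_adjugate_mulVec]
  rfl

def hank {R : Type*} (a : ℕ → R) (n : ℕ) : Matrix (Fin n) (Fin n) R :=
  of fun i j => a ((i : ℕ) + (j : ℕ))

def ex (n p : ℕ) : Fin n ⊕ Fin 1 → ℕ := Sum.elim (fun i => (i : ℕ)) (fun _ => p)

def bord {R : Type*} (a : ℕ → R) (n p q : ℕ) : Matrix (Fin n ⊕ Fin 1) (Fin n ⊕ Fin 1) R :=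
  of fun i j => a (ex n p i + ex n q j)

lemma bord_transpose {R : Type*} (a : ℕ → R) (n p q : ℕ) :
    (bord a n p q)ᵀ = bord a n q p := by
  ext i j; simp [bord, add_comm]

lemma det_bord_symm {R : Type*} [CommRing R] (a : ℕ → R) (n p q : ℕ) :
    (bord a n p q).det = (bord a n q p).det := by
  rw [← bord_transpose, det_transpose]

lemma det_hank_succ {R : Type*} [CommRing R] (a : ℕ → R) (n : ℕ) :
    (hank a (n + 1)).det = (bord a n n n).det := by
  rw [← det_submatrix_equiv_self (finSumFinEquiv (m := n) (n := 1))]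
  congr 1
  ext i j
  rcases i with i | i <;> rcases j with j | j <;> simp [hank, bord, ex]

lemma sum_ex {R : Type*} [CommRing R] (n : ℕ) (f : ℕ → R) :
    ∑ k : Fin n ⊕ Fin 1, f (ex n n k) = ∑ m ∈ Finset.range (n + 1), f m := by
  rw [Fintype.sum_sum_type, Finset.sum_range_succ]
  simp [ex, Fin.sum_univ_eq_sum_range]

lemma conv_split {R : Type*} [CommRing R] (a : ℕ → R) (i j : ℕ) :
    ∑ k ∈ Finset.range (i + j), a k * a (i + j - 1 - k) =
      ∑ m ∈ Finset.range i, a (i - 1 - m) * a (m + j)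
        + ∑ m ∈ Finset.range j, a (i + m) * a (j - 1 - m) := by
  rw [show Finset.range (i + j) = Finset.range (j + i) by rw [add_comm], Finset.sum_range_add,
    add_comm]
  congr 1
  · refine Finset.sum_congr rfl fun m hm => ?_
    rw [mul_comm]
    congr 2 <;> omega
  · rw [← Finset.sum_range_reflect]
    refine Finset.sum_congr rfl fun m hm => ?_
    have := Finset.mem_range.1 hm
    rw [mul_comm]
    congr 2; omega

section desn
variable {K : Type*} [Field K] (a : ℕ → K) (n : ℕ)

noncomputable def sch (p q : ℕ) : K :=
  a (p + q) - (fun m : Fin n => a (p + m)) ⬝ᵥ ((hank a n)⁻¹ *ᵥ fun m => a (m + q))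

lemma det_blk (h : (hank a n).det ≠ 0) {k : ℕ} (p q : Fin k → ℕ) :
    (fromBlocks (hank a n) (of fun (i : Fin n) j => a (i + q j))
      (of fun i (j : Fin n) => a (p i + j)) (of fun i j => a (p i + q j))).det
      = (hank a n).det * (of fun i j => sch a n (p i) (q j)).det := by
  have hu : IsUnit (hank a n).det := isUnit_iff_ne_zero.2 h
  let _ := invertibleOfIsUnitDet _ hu
  rw [det_fromBlocks₁₁, invOf_eq_nonsing_inv, Matrix.mul_assoc]
  rfl

lemma det_bord (h : (hank a n).det ≠ 0) (p q : ℕ) :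
    (bord a n p q).det = (hank a n).det * sch a n p q := by
  have := det_blk a n h (k := 1) (fun _ => p) (fun _ => q)
  rw [det_fin_one (of fun _ _ => sch a n p q), of_apply] at this
  rw [← this]
  congr 1
  ext i j
  rcases i with i | i <;> rcases j with j | j <;> simp [hank, bord, ex]

lemma desnanot (h : (hank a n).det ≠ 0) :
    (hank a (n + 2)).det * (hank a n).det =
      (hank a (n + 1)).det * (bord a n (n + 1) (n + 1)).det - (bord a n n (n + 1)).det ^ 2 := by
  have h2 : (hank a (n + 2)).det = (hank a n).det *
      (sch a n n n * sch a n (n+1) (n+1) - sch a n n (n+1) * sch a n (n+1) n) := by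
    have := det_blk a n h (k := 2) (fun i => n + i) (fun i => n + i)
    rw [det_fin_two] at this
    simp only [of_apply, Fin.val_zero, Fin.val_one, add_zero] at this
    rw [← this, ← det_submatrix_equiv_self (finSumFinEquiv (m := n) (n := 2))]
    congr 1
    ext i j
    rcases i with i | i <;> rcases j with j | j <;> simp [hank]
  have e : (bord a n n (n + 1)).det ^ 2 = (bord a n n (n + 1)).det * (bord a n (n+1) n).det := by
    rw [sq]; congr 1; exact det_bord_symm _ _ _ _
  rw [e, h2, det_hank_succ]
  simp only [det_bord a n h]
  ring
end desn

section dbord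
variable {R : Type*} [CommRing R] (D : Derivation ℤ R R) (a : ℕ → R) (h c : R)

def Qm (R : Type*) [CommRing R] (n : ℕ) : Matrix (Fin n ⊕ Fin 1) (Fin n ⊕ Fin 1) R :=
  of fun k j => if ex n n k = ex n n j + 1 then 1 else 0
def Lc (n : ℕ) : Matrix (Fin n ⊕ Fin 1) (Fin n ⊕ Fin 1) R :=
  of fun k j => if ex n n k < ex n n j then a (ex n n j - 1 - ex n n k) else 0
def Lr (n p : ℕ) : Matrix (Fin n ⊕ Fin 1) (Fin n ⊕ Fin 1) R :=
  of fun i k => Sum.elim (fun m : Fin n => if (m : ℕ) < ex n p i then a (ex n p i - 1 - m) else 0)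
    (fun _ => 0) k
def last (n : ℕ) (R : Type*) [CommRing R] : Fin n ⊕ Fin 1 → R := Pi.single (Sum.inr 0) 1

lemma trace_Qm (n : ℕ) : trace (Qm R n) = 0 := by simp [trace, Qm]
lemma trace_Lc (n : ℕ) : trace (Lc a n) = 0 := by simp [trace, Lc]
lemma trace_Lr (n p : ℕ) : trace (Lr a n p) = 0 := by simp [trace, Lr, ex]

lemma ex_le (n : ℕ) (j : Fin n ⊕ Fin 1) : ex n n j ≤ n := by
  rcases j with j | j <;> simp [ex]

lemma sum_lt_if (f : ℕ → R) (m N : ℕ) (hm : m ≤ N) :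
    ∑ k ∈ Finset.range N, (if k < m then f k else 0) = ∑ k ∈ Finset.range m, f k := by
  rw [← Finset.sum_filter]
  congr 1
  ext k; simp; omega

lemma bord_map
    (hrec : ∀ n, a (n + 1) = D (a n) + h * a n
      + c * ∑ k ∈ Finset.range n, a k * a (n - 1 - k))
    (n p : ℕ) (δ : R) (hp : (p = n ∧ δ = 0) ∨ (p = n + 1 ∧ δ = 1)) :
    (bord a n p n).map D = bord a n p n * Qm R n
      + vecMulVec (fun i => a (ex n p i + (n + 1))) (last n R)
      - h • bord a n p n
      - c • (Lr a n p * bord a n p n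
          + (δ * a 0) • vecMulVec (last n R) (fun j => a (n + ex n n j))
          + bord a n p n * Lc a n) := by
  ext i j
  have hD : D (a (ex n p i + ex n n j)) = a (ex n p i + ex n n j + 1)
      - h * a (ex n p i + ex n n j)
      - c * ∑ k ∈ Finset.range (ex n p i + ex n n j),
          a k * a (ex n p i + ex n n j - 1 - k) := by
    rw [hrec]; ring
  have h1 : (bord a n p n * Qm R n) i j
      + vecMulVec (fun i => a (ex n p i + (n + 1))) (last n R) i j
      = a (ex n p i + ex n n j + 1) := by
    simp only [mul_apply, bord, Qm, of_apply]
    rw [sum_ex n (fun m => a (ex n p i + m) * if m = ex n n j + 1 then 1 else 0)]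
    rcases j with j | j
    · have hj := j.2
      have e3 : ex n n (Sum.inl j) = j := rfl
      rw [e3, Finset.sum_eq_single_of_mem ((j : ℕ) + 1) (by simp)
        (by intro b _ hb; simp [hb])]
      simp [last, vecMulVec_apply, add_assoc]
    · simp [ex, last, vecMulVec_apply, add_assoc, Subsingleton.elim j 0]
  have h2 : (bord a n p n * Lc a n) i j
      = ∑ m ∈ Finset.range (ex n n j), a (ex n p i + m) * a (ex n n j - 1 - m) := by
    simp only [mul_apply, bord, Lc, of_apply]
    rw [sum_ex n (fun m => a (ex n p i + m) *
      if m < ex n n j then a (ex n n j - 1 - m) else 0)]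
    simp only [mul_ite, mul_zero]
    exact sum_lt_if _ _ _ ((ex_le n j).trans (Nat.le_succ n))
  have h3 : (Lr a n p * bord a n p n) i j
      + (δ * a 0) * vecMulVec (last n R) (fun j => a (n + ex n n j)) i j
      = ∑ m ∈ Finset.range (ex n p i), a (ex n p i - 1 - m) * a (m + ex n n j) := by
    simp only [mul_apply, bord, Lr, of_apply, Fintype.sum_sum_type, Sum.elim_inl, Sum.elim_inr,
      zero_mul, Finset.sum_const_zero, add_zero]
    have e : ∀ x : Fin n, ex n p (Sum.inl x) = x := fun x => rfl
    simp only [e]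
    rw [Fin.sum_univ_eq_sum_range (fun m => (if m < ex n p i then a (ex n p i - 1 - m) else 0)
      * a (m + ex n n j)) n]
    simp only [ite_mul, zero_mul]
    rcases i with i | i
    · rw [sum_lt_if _ _ _ (by simp [ex])]
      simp [last, vecMulVec_apply]
    · obtain rfl : i = 0 := Subsingleton.elim _ _
      have e2 : ex n p (Sum.inr 0) = p := rfl
      rw [e2]
      rcases hp with ⟨rfl, rfl⟩ | ⟨rfl, rfl⟩
      · rw [sum_lt_if _ _ _ le_rfl]; simp
      · rw [Finset.sum_range_succ]
        congr 1
        · refine Finset.sum_congr rfl fun k hk => ?_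
          have := Finset.mem_range.1 hk
          rw [if_pos (by omega)]
        · simp [last, vecMulVec_apply]
  simp only [map_apply, Matrix.sub_apply, Matrix.add_apply, Matrix.smul_apply, smul_eq_mul]
  rw [h1, h3, h2]
  simp only [bord, of_apply]
  rw [hD, conv_split]

lemma trace_vecMulVec_col (n : ℕ) (M : Matrix (Fin n ⊕ Fin 1) (Fin n ⊕ Fin 1) R)
    (v : Fin n ⊕ Fin 1 → R) :
    trace (adjugate M * vecMulVec v (last n R)) = (M.updateCol (Sum.inr 0) v).det := by
  rw [mul_vecMulVec, trace_vecMulVec, ← cramer_eq_adjugate_mulVec, last, dotProduct_single,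
    mul_one, cramer_apply]

lemma trace_vecMulVec_row (n : ℕ) (M : Matrix (Fin n ⊕ Fin 1) (Fin n ⊕ Fin 1) R)
    (v : Fin n ⊕ Fin 1 → R) :
    trace (adjugate M * vecMulVec (last n R) v) = (M.updateRow (Sum.inr 0) v).det := by
  rw [← trace_transpose, transpose_mul, transpose_vecMulVec, adjugate_transpose, trace_mul_comm,
    trace_vecMulVec_col, ← det_transpose, updateCol_transpose, transpose_transpose]

lemma D_det_bord
    (hrec : ∀ n, a (n + 1) = D (a n) + h * a n
      + c * ∑ k ∈ Finset.range n, a k * a (n - 1 - k))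
    (n p : ℕ) (δ : R) (hp : (p = n ∧ δ = 0) ∨ (p = n + 1 ∧ δ = 1)) :
    D (bord a n p n).det = (bord a n p (n + 1)).det - (n + 1) * h * (bord a n p n).det
      - c * (δ * a 0) * (bord a n n n).det := by
  rw [derivation_det, bord_map D a h c hrec n p δ hp]
  have t1 : trace (adjugate (bord a n p n) * (bord a n p n * Qm R n)) = 0 := by
    rw [← Matrix.mul_assoc, adjugate_mul, smul_mul, trace_smul, Matrix.one_mul, trace_Qm, smul_zero]
  have t2 : trace (adjugate (bord a n p n) * (bord a n p n * Lc a n)) = 0 := by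
    rw [← Matrix.mul_assoc, adjugate_mul, smul_mul, trace_smul, Matrix.one_mul, trace_Lc, smul_zero]
  have t3 : trace (adjugate (bord a n p n) * (Lr a n p * bord a n p n)) = 0 := by
    rw [trace_mul_comm, Matrix.mul_assoc, mul_adjugate, Matrix.mul_smul, trace_smul, Matrix.mul_one,
      trace_Lr, smul_zero]
  simp only [Matrix.mul_sub, Matrix.mul_add, Matrix.mul_smul, trace_add, trace_sub, trace_smul,
    t1, t2, t3, trace_vecMulVec_col, trace_vecMulVec_row, adjugate_mul, trace_one]
  have u1 : ((bord a n p n).updateCol (Sum.inr 0) fun i => a (ex n p i + (n + 1)))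
      = bord a n p (n + 1) := by
    ext i j
    rcases j with j | j
    · simp [bord, ex]
    · simp [bord, ex, Subsingleton.elim j 0]
  have u2 : ((bord a n p n).updateRow (Sum.inr 0) fun j => a (n + ex n n j))
      = bord a n n n := by
    ext i j
    rcases i with i | i
    · simp [bord, updateRow_apply, ex]
    · simp [bord, updateRow_apply, ex, Subsingleton.elim i 0]
  rw [u1, u2]
  simp
  ring
end dbord

theorem toda {K : Type*} [Field K] (D : Derivation ℤ K K) (a : ℕ → K) (h c : K)
    (hrec : ∀ n, a (n + 1) = D (a n) + h * a n
      + c * ∑ k ∈ Finset.range n, a k * a (n - 1 - k)) (n : ℕ)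
    (hn : (hank a n).det ≠ 0) :
    (hank a (n + 2)).det * (hank a n).det =
      (hank a (n + 1)).det * D (D (hank a (n + 1)).det) - (D (hank a (n + 1)).det) ^ 2
      + ((n + 1) * D h + c * a 0) * (hank a (n + 1)).det ^ 2 := by
  rw [desnanot a n hn, det_hank_succ]
  have e1 := D_det_bord D a h c hrec n n 0 (Or.inl ⟨rfl, rfl⟩)
  have e2 := D_det_bord D a h c hrec n (n + 1) 1 (Or.inr ⟨rfl, rfl⟩)
  rw [det_bord_symm a n (n + 1) n] at e2
  have e3 : (bord a n n (n + 1)).det = D (bord a n n n).det + (n + 1) * h * (bord a n n n).det := by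
    rw [e1]; ring
  rw [e3] at e2 ⊢
  have e4 : (bord a n (n+1) (n + 1)).det = D (D (bord a n n n).det + (n + 1) * h * (bord a n n n).det)
     + (n + 1) * h * (D (bord a n n n).det + (n + 1) * h * (bord a n n n).det)
     + c * a 0 * (bord a n n n).det := by
    rw [e2]; ring
  rw [e4]
  simp only [map_add, Derivation.leibniz, smul_eq_mul, Derivation.map_natCast, Derivation.map_one_eq_zero]
  ring

lemma frac_derivation (A K : Type*) [CommRing A] [IsDomain A] [Field K] [Algebra A K]
    [IsFractionRing A K] (D : Derivation ℤ A A) :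
    ∃ D' : Derivation ℤ K K,
      ∀ a, D' (algebraMap A K a) = algebraMap A K (D a) := by
  let f : A →+* TrivSqZeroExt K K :=
    { toFun := fun a => (algebraMap A K a, algebraMap A K (D a))
      map_one' := by
        apply TrivSqZeroExt.ext
        · exact map_one _
        · change algebraMap A K (D 1) = 0
          simp
      map_zero' := by
        apply TrivSqZeroExt.ext
        · exact map_zero _
        · change algebraMap A K (D 0) = 0
          simp
      map_mul' := by
        intro x y
        apply TrivSqZeroExt.ext
        · exact map_mul _ _ _
        · change algebraMap A K (D (x * y)) = algebraMap A K x • algebraMap A K (D y)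
            + MulOpposite.op (algebraMap A K y) • algebraMap A K (D x)
          simp [Derivation.leibniz, mul_comm]
      map_add' := by
        intro x y
        apply TrivSqZeroExt.ext
        · exact map_add _ _ _
        · change algebraMap A K (D (x + y)) = algebraMap A K (D x) + algebraMap A K (D y)
          simp }
  have hf1 : ∀ a, (f a).fst = algebraMap A K a := fun _ => rfl
  have hf2 : ∀ a, (f a).snd = algebraMap A K (D a) := fun _ => rfl
  have hf : ∀ y : nonZeroDivisors A, IsUnit (f y) := by
    intro y
    rw [TrivSqZeroExt.isUnit_iff_isUnit_fst, hf1]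
    exact IsLocalization.map_units K y
  let F : K →+* TrivSqZeroExt K K := IsLocalization.lift hf
  have hF : ∀ a, F (algebraMap A K a) = f a := fun a => IsLocalization.lift_eq hf a
  have hfst : ∀ x, (F x).fst = x := by
    have : ((TrivSqZeroExt.fstHom K K K : _ →ₐ[K] K) : _ →+* K).comp F = RingHom.id K := by
      apply IsLocalization.ringHom_ext (nonZeroDivisors A)
      ext a
      simp [hF, hf1]
    intro x
    exact RingHom.congr_fun this x
  refine ⟨Derivation.mk' (AddMonoidHom.toIntLinearMap
    ⟨⟨fun x => (F x).snd, by simp⟩, by intro x y; simp⟩) ?_, ?_⟩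
  · intro x y
    simp [TrivSqZeroExt.snd_mul, hfst]
    exact mul_comm _ _
  · intro a
    simp [hF, hf2]

/-- The Bäcklund-chain induction in a differential field. -/
lemma chain {K : Type*} [Field K] [CharZero K] (D : Derivation ℤ K K) (z h g β : K)
    (hz : D z = 1) (hβ : D β = 0) (hβn : ∀ n : ℕ, β + n + 1 ≠ 0) (T : ℕ → K)
    (hT0 : T 0 = 1) (hT1 : T 1 ≠ 0)
    (htoda : ∀ n, T n ≠ 0 → T (n + 2) * T n = T (n + 1) * D (D (T (n + 1))) - D (T (n + 1)) ^ 2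
      + ((n + 1) * D h + g) * T (n + 1) ^ 2)
    (hb1 : D (D (D (T 1) / T 1 + h)) = 2 * (D (T 1) / T 1 + h) ^ 3
      - 4 * z * (D (T 1) / T 1 + h) + 4 * β + 2)
    (hb2 : D (D (T 1) / T 1 + h) + (D (T 1) / T 1 + h) ^ 2 + 2 * g = 2 * z) (n : ℕ) :
    T n ≠ 0 ∧ T (n + 1) ≠ 0 ∧
    ∀ V, V = D (T (n + 1)) / T (n + 1) - D (T n) / T n + h →
      D (D V) = 2 * V ^ 3 - 4 * z * V + 4 * (β + n) + 2 ∧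
      2 * D (D (T (n + 1)) / T (n + 1) + (n + 1) * h) + 2 * g = D V - V ^ 2 + 2 * z := by
  induction n with
  | zero =>
    refine ⟨by rw [hT0]; exact one_ne_zero, hT1, ?_⟩
    intro V hV
    have : V = D (T 1) / T 1 + h := by rw [hV]; simp [hT0]
    rw [← this] at hb1 hb2
    simp only [Nat.cast_zero, zero_add, add_zero, one_mul]
    rw [← this]
    constructor
    · rw [hb1]
    · linear_combination hb2
  | succ n ih =>
    obtain ⟨h0, h1, ih⟩ := ih
    obtain ⟨i1, i2⟩ := ih _ rfl
    have hDnat : ∀ m : ℕ, D (m : K) = 0 := fun m => D.map_natCast m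
    have hD2 : D (2 : K) = 0 := by exact_mod_cast hDnat 2
    have hD4 : D (4 : K) = 0 := by exact_mod_cast hDnat 4
    have ht := htoda n h0
    set V := D (T (n + 1)) / T (n + 1) - D (T n) / T n + h with hV
    set v := D V - V ^ 2 + 2 * z with hv
    set κ : K := 4 * (β + n + 1) with hκ
    have hκ0 : κ ≠ 0 := mul_ne_zero (by norm_num) (hβn n)
    have hDκ : D κ = 0 := by
      simp [hκ, Derivation.leibniz, hβ, hD4]
    have hv' : D v = -2 * V * v + κ := by
      rw [hv]
      simp only [map_add, map_sub, Derivation.leibniz, Derivation.leibniz_pow, i1, hz, hD2, smul_eq_mul, nsmul_eq_mul]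
      push_cast
      simp only [pow_one]
      rw [hκ]
      ring
    have hv0 : v ≠ 0 := by
      intro h
      rw [h] at hv'
      simp at hv'
      exact hκ0 hv'.symm
    have hDl : D (D (T (n + 1)) / T (n + 1) + (n + 1) * h) * T (n + 1) ^ 2
        = T (n + 1) * D (D (T (n + 1))) - D (T (n + 1)) ^ 2 + (n + 1) * D h * T (n + 1) ^ 2 := by
      simp only [map_add, Derivation.leibniz_div, Derivation.leibniz, smul_eq_mul, hDnat, Derivation.map_one_eq_zero]
      field_simp
      ring
    have ht2 : T (n + 2) * T n = T (n + 1) ^ 2 * v / 2 := by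
      rw [ht]
      linear_combination -hDl + (T (n + 1) ^ 2 / 2) * i2
    have hT2 : T (n + 2) ≠ 0 := by
      intro h
      rw [h, zero_mul] at ht2
      have : T (n + 1) ^ 2 * v / 2 ≠ 0 :=
        div_ne_zero (mul_ne_zero (pow_ne_zero _ h1) hv0) two_ne_zero
      exact this ht2.symm
    refine ⟨h1, hT2, ?_⟩
    intro W hW
    have hlog : W = V + D v / v := by
      have e := congrArg D (show T (n + 2) * T n * 2 = T (n + 1) ^ 2 * v by rw [ht2]; ring)
      simp only [Derivation.leibniz, Derivation.leibniz_pow, hD2, smul_eq_mul, nsmul_eq_mul] at e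
      push_cast at e
      simp only [pow_one, mul_zero, zero_add] at e
      have e2 : T (n + 2) = T (n + 1) ^ 2 * v / 2 / T n := by
        field_simp; linear_combination 2 * ht2
      have e3 : D (T (n + 2)) / T (n + 2) + D (T n) / T n
          = 2 * (D (T (n + 1)) / T (n + 1)) + D v / v := by
        have e4 : T (n + 2) * T n * 2 = T (n + 1) ^ 2 * v := by rw [ht2]; ring
        have l1 : D (T (n + 2)) / T (n + 2) + D (T n) / T n
            = (2 * (T (n + 2) * D (T n) + T n * D (T (n + 2)))) / (T (n + 2) * T n * 2) := by
          field_simp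
          ring
        rw [l1, e, e4]
        field_simp
        ring
      rw [hW, hV]
      linear_combination e3
    have hW2 : W = -V + κ / v := by
      rw [hlog, hv']; field_simp; ring
    have hWV : (W + V) * v = κ := by rw [hW2]; field_simp; ring
    have hWV2 : (W - V) * v = D v := by rw [hlog]; field_simp; ring
    have hDW : D W = -D V - W ^ 2 + V ^ 2 := by
      have e := congrArg D hWV
      simp only [Derivation.leibniz, map_add, smul_eq_mul, hDκ] at e
      apply mul_right_cancel₀ hv0
      linear_combination e + (W + V) * hWV2
    have hDW2 : D W = 2 * z - v - W ^ 2 := by rw [hDW, hv]; ring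
    constructor
    · rw [hDW2]
      simp only [map_sub, Derivation.leibniz, Derivation.leibniz_pow, hz, hD2, smul_eq_mul, nsmul_eq_mul]
      push_cast
      simp only [pow_one]
      rw [hDW2, hv']
      linear_combination 2 * hWV + hκ
    · have hl : D (T (n + 1 + 1)) / T (n + 1 + 1) + ((n + 1 : ℕ) + 1) * h
          = (D (T (n + 1)) / T (n + 1) + (n + 1) * h) + W := by
        rw [hW]; push_cast; ring
      rw [hl, map_add]
      linear_combination i2 + hDW2
lemma int_derivation {A : Type*} [CommRing A] [Algebra ℝ A] (D0 : Derivation ℝ A A) :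
    ∃ D : Derivation ℤ A A, ∀ x, D x = D0 x :=
  ⟨Derivation.mk' D0.toLinearMap.toAddMonoidHom.toIntLinearMap
    (fun a b => D0.leibniz a b), fun _ => rfl⟩

open Matrix

/-- Cleared-denominator form of the Painlevé equation for the sum of `h` and the
logarithmic derivative of `g / f`. -/
def Pnum {R : Type*} [CommRing R] (f f1 f2 f3 g g1 g2 g3 h h2 z b : R) : R :=
  f ^ 3 * (g3 * g ^ 2 - 3 * g1 * g2 * g + 2 * g1 ^ 3)
    - g ^ 3 * (f3 * f ^ 2 - 3 * f1 * f2 * f + 2 * f1 ^ 3) + h2 * f ^ 3 * g ^ 3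
    - 2 * (g1 * f - f1 * g + h * f * g) ^ 3
    + 4 * z * (g1 * f - f1 * g + h * f * g) * f ^ 2 * g ^ 2 - (4 * b + 2) * f ^ 3 * g ^ 3

lemma Pnum_eq {K : Type*} [Field K] (f f1 f2 f3 g g1 g2 g3 h h2 z b : K) (hf : f ≠ 0) (hg : g ≠ 0) :
    Pnum f f1 f2 f3 g g1 g2 g3 h h2 z b = f ^ 3 * g ^ 3 *
      ((g3 * g ^ 2 - 3 * g1 * g2 * g + 2 * g1 ^ 3) / g ^ 3
        - (f3 * f ^ 2 - 3 * f1 * f2 * f + 2 * f1 ^ 3) / f ^ 3 + h2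
        - (2 * (g1 / g - f1 / f + h) ^ 3 - 4 * z * (g1 / g - f1 / f + h) + 4 * b + 2)) := by
  unfold Pnum
  field_simp
  ring

lemma map_Pnum {R S : Type*} [CommRing R] [CommRing S] (φ : R →+* S)
    (f f1 f2 f3 g g1 g2 g3 h h2 z b : R) :
    φ (Pnum f f1 f2 f3 g g1 g2 g3 h h2 z b) =
      Pnum (φ f) (φ f1) (φ f2) (φ f3) (φ g) (φ g1) (φ g2) (φ g3) (φ h) (φ h2) (φ z) (φ b) := by
  simp [Pnum, map_ofNat]

lemma DD_logder {K : Type*} [Field K] (D : Derivation ℤ K K) (f : K) (hf : f ≠ 0) :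
    D (D (D f / f)) = (D (D (D f)) * f ^ 2 - 3 * D f * D (D f) * f + 2 * D f ^ 3) / f ^ 3 := by
  have : D (D f / f) = D (D f) / f - (D f / f) ^ 2 := by
    rw [Derivation.leibniz_div]; simp only [smul_eq_mul]; field_simp
  rw [this, map_sub, Derivation.leibniz_pow, this, Derivation.leibniz_div]
  simp only [smul_eq_mul, nsmul_eq_mul]
  push_cast
  field_simp
  ring

lemma map_hank_det {R S : Type*} [CommRing R] [CommRing S] (φ : R →+* S) (a : ℕ → R) (n : ℕ) :
    φ (hank a n).det = (hank (fun k => φ (a k)) n).det := by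
  rw [RingHom.map_det]; rfl

lemma poly_identity {A K : Type*} [CommRing A] [Field K] [CharZero K]
    (ι : A →+* K) (hι : Function.Injective ι) (D : Derivation ℤ A A)
    (D' : Derivation ℤ K K) (hD' : ∀ x, D' (ι x) = ι (D x))
    (z h c β : A) (a : ℕ → A) (hz : D z = 1) (hβ : D β = 0) (hβn : ∀ n : ℕ, β + n + 1 ≠ 0)
    (ha0 : a 0 ≠ 0)
    (hrec : ∀ n, a (n + 1) = D (a n) + h * a n
      + c * ∑ k ∈ Finset.range n, a k * a (n - 1 - k))
    (hbase : ∀ x, x = D' (ι (a 0)) / ι (a 0) + ι h →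
      D' (D' x) = 2 * x ^ 3 - 4 * ι z * x + 4 * ι β + 2 ∧
      D' x + x ^ 2 + 2 * (ι c * ι (a 0)) = 2 * ι z) (n : ℕ) :
    Pnum (hank a n).det (D (hank a n).det) (D (D (hank a n).det)) (D (D (D (hank a n).det)))
      (hank a (n + 1)).det (D (hank a (n + 1)).det) (D (D (hank a (n + 1)).det))
      (D (D (D (hank a (n + 1)).det))) h (D (D h)) z (β + n) = 0 := by
  apply hι
  have hinj : ∀ x, x ≠ 0 → ι x ≠ 0 := fun x hx => (map_ne_zero_iff ι hι).2 hx
  have hT1 : (hank (fun k => ι (a k)) 1).det = ι (a 0) := by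
    rw [det_fin_one]; rfl
  obtain ⟨b1, b2⟩ := hbase _ rfl
  obtain ⟨h0, h1, hV⟩ := chain D' (ι z) (ι h) (ι c * ι (a 0)) (ι β) (by rw [hD', hz, map_one])
    (by rw [hD', hβ, map_zero])
    (fun n => by simpa using hinj _ (hβn n)) (fun n => (hank (fun k => ι (a k)) n).det)
    (by simp) (by simp only [hT1]; exact hinj _ ha0)
    (fun n hn => toda D' _ (ι h) (ι c) (fun n => by rw [hrec]; simp [hD']) n hn)
    (by simp only [hT1]; exact b1) (by simp only [hT1]; exact b2) n
  obtain ⟨hV, -⟩ := hV _ rfl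
  simp only [← map_hank_det] at h0 h1 hV
  rw [map_Pnum]
  simp only [← hD']
  rw [Pnum_eq _ _ _ _ _ _ _ _ _ _ _ _ h0 h1, map_zero]
  rw [map_add, map_sub, map_add, map_sub, DD_logder _ _ h0, DD_logder _ _ h1] at hV
  rw [hV]
  push_cast [map_add, map_natCast]
  ring

lemma poly_identities {A K : Type*} [CommRing A] [Field K] [CharZero K]
    (ι : A →+* K) (hι : Function.Injective ι) (D : Derivation ℤ A A)
    (D' : Derivation ℤ K K) (hD' : ∀ x, D' (ι x) = ι (D x))
    (α z u p w2 : A) (hα : D α = 0) (hz : D z = 1) (hu : D u = p)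
    (hp : D p = 2 * u ^ 3 - 4 * z * u + 4 * α + 2) (hw : 2 * w2 = - p - u ^ 2 + 2 * z)
    (hw0 : w2 ≠ 0) (hα1 : ∀ n : ℕ, α + n + 1 ≠ 0) (hα2 : ∀ n : ℕ, -α + n + 1 ≠ 0)
    (a b : ℕ → A) (ha0 : a 0 = 1) (hb0 : b 0 = w2)
    (hra : ∀ n, a (n + 1) = D (a n) + u * a n
      + w2 * ∑ k ∈ Finset.range n, a k * a (n - 1 - k))
    (hrb : ∀ n, b (n + 1) = D (b n) + (-u) * b n
      + 1 * ∑ k ∈ Finset.range n, b k * b (n - 1 - k)) (n : ℕ) :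
    Pnum (hank a n).det (D (hank a n).det) (D (D (hank a n).det)) (D (D (D (hank a n).det)))
      (hank a (n + 1)).det (D (hank a (n + 1)).det) (D (D (hank a (n + 1)).det))
      (D (D (D (hank a (n + 1)).det))) u (D (D u)) z (α + n) = 0 ∧
    Pnum (hank b n).det (D (hank b n).det) (D (D (hank b n).det)) (D (D (D (hank b n).det)))
      (hank b (n + 1)).det (D (hank b (n + 1)).det) (D (D (hank b (n + 1)).det))
      (D (D (D (hank b (n + 1)).det))) (-u) (D (D (-u))) z (-α + n) = 0 := by
  have A0 : (1 : A) ≠ 0 := by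
    intro h
    apply hw0
    rw [← mul_one w2, h, mul_zero]
  have kz : D' (ι z) = 1 := by rw [hD', hz, map_one]
  have kα : D' (ι α) = 0 := by rw [hD', hα, map_zero]
  have ku : D' (ι u) = ι p := by rw [hD', hu]
  have kp : D' (ι p) = 2 * ι u ^ 3 - 4 * ι z * ι u + 4 * ι α + 2 := by rw [hD', hp]; simp [map_ofNat]
  have kw : 2 * ι w2 = - ι p - ι u ^ 2 + 2 * ι z := by
    have := congrArg ι hw
    simpa [map_ofNat] using this
  have kw0 : ι w2 ≠ 0 := (map_ne_zero_iff ι hι).2 hw0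
  have hD2 : D' (2 : K) = 0 := by exact_mod_cast D'.map_natCast 2
  constructor
  · refine poly_identity ι hι D D' hD' z u w2 α a hz hα hα1 (by rw [ha0]; exact A0) hra ?_ n
    intro x hx
    rw [ha0] at hx ⊢
    simp at hx
    rw [hx, ku, kp]
    refine ⟨rfl, ?_⟩
    rw [map_one]
    linear_combination kw
  · refine poly_identity ι hι D D' hD' z (-u) 1 (-α) b hz (by simp [hα]) hα2
      (by rw [hb0]; exact hw0) hrb ?_ n
    intro x hx
    rw [hb0] at hx ⊢
    rw [map_neg] at hx ⊢
    have kDw : D' (ι w2) = 2 * ι u * ι w2 - 2 * ι α := by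
      have e := congrArg D' kw
      simp only [map_add, map_sub, map_neg, Derivation.leibniz, Derivation.leibniz_pow, hD2,
        smul_eq_mul, nsmul_eq_mul, kz, ku, kp] at e
      push_cast at e
      simp only [pow_one] at e
      apply mul_left_cancel₀ (two_ne_zero (α := K))
      linear_combination e - 2 * ι u * kw
    have e1 : ι w2 * (x + ι u) = D' (ι w2) := by rw [hx]; field_simp; ring
    have e2 : ι w2 * (x - ι u) = - 2 * ι α := by linear_combination e1 + kDw
    have e3 : D' x = ι p - x ^ 2 + ι u ^ 2 := by
      have e := congrArg D' e2
      simp only [map_sub, Derivation.leibniz, smul_eq_mul, kα, ku, map_neg, hD2] at e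
      apply mul_left_cancel₀ kw0
      linear_combination e + (x - ι u) * e1
    have e4 : D' x = 2 * ι z - 2 * ι w2 - x ^ 2 := by rw [e3]; linear_combination kw
    constructor
    · rw [e4]
      simp only [map_sub, Derivation.leibniz, Derivation.leibniz_pow, hD2,
        smul_eq_mul, nsmul_eq_mul, kz]
      push_cast
      simp only [pow_one]
      rw [e4]
      linear_combination 2 * e1 + 2 * e2
    · rw [e4, map_one]; ring

/-- sequences defined by the gauge-transformed recursion -/
noncomputable def gseq {A : Type*} [CommRing A] (D : Derivation ℤ A A) (h c a0 : A) : ℕ → A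
  | 0 => a0
  | n + 1 => D (gseq D h c a0 n) + h * gseq D h c a0 n
      + c * ∑ k : Fin n, gseq D h c a0 k * gseq D h c a0 (n - 1 - k)
  decreasing_by all_goals omega

lemma gseq_zero {A : Type*} [CommRing A] (D : Derivation ℤ A A) (h c a0 : A) :
    gseq D h c a0 0 = a0 := by rw [gseq]

lemma gseq_succ {A : Type*} [CommRing A] (D : Derivation ℤ A A) (h c a0 : A) (n : ℕ) :
    gseq D h c a0 (n + 1) = D (gseq D h c a0 n) + h * gseq D h c a0 n
      + c * ∑ k ∈ Finset.range n, gseq D h c a0 k * gseq D h c a0 (n - 1 - k) := by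
  rw [gseq, Fin.sum_univ_eq_sum_range (fun k => gseq D h c a0 k * gseq D h c a0 (n - 1 - k))]

section real
lemma psi_eq {A : Type*} [CommRing A] (D : Derivation ℤ A A) (I : Set ℝ) (hI : IsOpen I)
    (ev : ℝ → A →+* ℝ) (hev : ∀ x, ∀ z ∈ I, HasDerivAt (fun t => ev t x) (ev z (D x)) z)
    (h c : A) (a : ℕ → A)
    (hrec : ∀ n, a (n + 1) = D (a n) + h * a n
        + c * ∑ k ∈ Finset.range n, a k * a (n - 1 - k))
    (g C : ℝ → ℝ) (hg : ∀ z ∈ I, HasDerivAt g (ev z h * g z) z)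
    (hC : ∀ z ∈ I, C z * g z = ev z c)
    (Ψ : ℕ → ℝ → ℝ) (hΨ0 : ∀ z ∈ I, Ψ 0 z = g z * ev z (a 0))
    (hΨ : ∀ n : ℕ, ∀ z ∈ I, Ψ (n + 1) z =
        deriv (Ψ n) z + C z * ∑ k ∈ Finset.range n, Ψ k z * Ψ (n - 1 - k) z)
    (n : ℕ) : ∀ z ∈ I, Ψ n z = g z * ev z (a n) := by
  induction n using Nat.strong_induction_on with
  | _ n ih =>
    cases n with
    | zero => exact hΨ0
    | succ n =>
      intro z hz
      have hd : deriv (Ψ n) z = ev z h * g z * ev z (a n) + g z * ev z (D (a n)) := by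
        have e : Ψ n =ᶠ[nhds z] fun t => g t * ev t (a n) := by
          filter_upwards [hI.mem_nhds hz] with t ht using ih n (by omega) t ht
        rw [e.deriv_eq]
        exact ((hg z hz).mul (hev (a n) z hz)).deriv
      have hs : ∑ k ∈ Finset.range n, Ψ k z * Ψ (n - 1 - k) z
          = g z ^ 2 * ev z (∑ k ∈ Finset.range n, a k * a (n - 1 - k)) := by
        rw [map_sum, Finset.mul_sum]
        refine Finset.sum_congr rfl fun k hk => ?_
        have := Finset.mem_range.1 hk
        rw [ih k (by omega) z hz, ih (n - 1 - k) (by omega) z hz, map_mul]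
        ring
      rw [hΨ n z hz, hd, hs, hrec]
      simp only [map_add, map_mul]
      rw [← hC z hz]
      ring

lemma hank_eq {A : Type*} [CommRing A] (D : Derivation ℤ A A) (I : Set ℝ) (hI : IsOpen I)
    (ev : ℝ → A →+* ℝ) (hev : ∀ x, ∀ z ∈ I, HasDerivAt (fun t => ev t x) (ev z (D x)) z)
    (h c : A) (a : ℕ → A)
    (hrec : ∀ n, a (n + 1) = D (a n) + h * a n
        + c * ∑ k ∈ Finset.range n, a k * a (n - 1 - k))
    (g C : ℝ → ℝ) (hg : ∀ z ∈ I, HasDerivAt g (ev z h * g z) z)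
    (hC : ∀ z ∈ I, C z * g z = ev z c)
    (Ψ : ℕ → ℝ → ℝ) (hΨ0 : ∀ z ∈ I, Ψ 0 z = g z * ev z (a 0))
    (hΨ : ∀ n : ℕ, ∀ z ∈ I, Ψ (n + 1) z =
        deriv (Ψ n) z + C z * ∑ k ∈ Finset.range n, Ψ k z * Ψ (n - 1 - k) z)
    (n : ℕ) : ∀ z ∈ I, (hank (fun k => Ψ k z) n).det
    = g z ^ n * ev z (hank a n).det := by
  intro z hz
  have : hank (fun k => Ψ k z) n = g z • hank (fun k => ev z (a k)) n := by
    ext i j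
    simp [hank, psi_eq D I hI ev hev h c a hrec g C hg hC Ψ hΨ0 hΨ _ z hz]
  rw [this, det_smul, map_hank_det, Fintype.card_fin]

lemma logder_eq {A : Type*} [CommRing A] (D : Derivation ℤ A A) (I : Set ℝ) (hI : IsOpen I)
    (ev : ℝ → A →+* ℝ) (hev : ∀ x, ∀ z ∈ I, HasDerivAt (fun t => ev t x) (ev z (D x)) z)
    (h c : A) (a : ℕ → A)
    (hrec : ∀ n, a (n + 1) = D (a n) + h * a n
        + c * ∑ k ∈ Finset.range n, a k * a (n - 1 - k))
    (g C : ℝ → ℝ) (hg : ∀ z ∈ I, HasDerivAt g (ev z h * g z) z) (hg0 : ∀ z ∈ I, g z ≠ 0)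
    (hC : ∀ z ∈ I, C z * g z = ev z c)
    (Ψ : ℕ → ℝ → ℝ) (hΨ0 : ∀ z ∈ I, Ψ 0 z = g z * ev z (a 0))
    (hΨ : ∀ n : ℕ, ∀ z ∈ I, Ψ (n + 1) z =
        deriv (Ψ n) z + C z * ∑ k ∈ Finset.range n, Ψ k z * Ψ (n - 1 - k) z)
    (n : ℕ) (z : ℝ) (hz : z ∈ I) (hne : (hank (fun k => Ψ k z) n).det ≠ 0) :
    ev z (hank a n).det ≠ 0 ∧
    deriv (fun t => (hank (fun k => Ψ k t) n).det) z / (hank (fun k => Ψ k z) n).det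
      = n * ev z h + ev z (D (hank a n).det) / ev z (hank a n).det := by
  have hq := hank_eq D I hI ev hev h c a hrec g C hg hC Ψ hΨ0 hΨ n
  have h1 : ev z (hank a n).det ≠ 0 := by
    intro h0
    rw [hq z hz, h0, mul_zero] at hne
    exact hne rfl
  refine ⟨h1, ?_⟩
  have e : (fun t => (hank (fun k => Ψ k t) n).det) =ᶠ[nhds z]
      fun t => g t ^ n * ev t (hank a n).det := by
    filter_upwards [hI.mem_nhds hz] with t ht using hq t ht
  have hd : HasDerivAt (fun t => g t ^ n * ev t (hank a n).det) _ z :=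
    ((hg z hz).pow n).mul (hev (hank a n).det z hz)
  rw [e.deriv_eq, hq z hz, hd.deriv]
  have := hg0 z hz
  cases n with
  | zero => simp
  | succ n =>
    simp only [Nat.add_sub_cancel, Pi.pow_apply]
    field_simp
    ring

lemma real_main {A : Type*} [CommRing A] (D : Derivation ℤ A A) (I : Set ℝ) (hI : IsOpen I)
    (ev : ℝ → A →+* ℝ) (hev : ∀ x, ∀ z ∈ I, HasDerivAt (fun t => ev t x) (ev z (D x)) z)
    (h c : A) (a : ℕ → A)
    (hrec : ∀ n, a (n + 1) = D (a n) + h * a n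
        + c * ∑ k ∈ Finset.range n, a k * a (n - 1 - k))
    (g C : ℝ → ℝ) (hg : ∀ z ∈ I, HasDerivAt g (ev z h * g z) z) (hg0 : ∀ z ∈ I, g z ≠ 0)
    (hC : ∀ z ∈ I, C z * g z = ev z c)
    (Ψ : ℕ → ℝ → ℝ) (hΨ0 : ∀ z ∈ I, Ψ 0 z = g z * ev z (a 0))
    (hΨ : ∀ n : ℕ, ∀ z ∈ I, Ψ (n + 1) z =
        deriv (Ψ n) z + C z * ∑ k ∈ Finset.range n, Ψ k z * Ψ (n - 1 - k) z)
    (n : ℕ) (zA β : A) (b : ℝ)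
    (hzA : ∀ z ∈ I, ev z zA = z) (hβ : ∀ z ∈ I, ev z β = b)
    (hP : Pnum (hank a n).det (D (hank a n).det) (D (D (hank a n).det)) (D (D (D (hank a n).det)))
      (hank a (n + 1)).det (D (hank a (n + 1)).det) (D (D (hank a (n + 1)).det))
      (D (D (D (hank a (n + 1)).det))) h (D (D h)) zA β = 0)
    (hn0 : ∀ z ∈ I, (hank (fun k => Ψ k z) n).det ≠ 0)
    (hn1 : ∀ z ∈ I, (hank (fun k => Ψ k z) (n + 1)).det ≠ 0)
    (V : ℝ → ℝ) (hV : V = fun z =>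
      deriv (fun t => (hank (fun k => Ψ k t) (n + 1)).det) z / (hank (fun k => Ψ k z) (n + 1)).det
      - deriv (fun t => (hank (fun k => Ψ k t) n).det) z / (hank (fun k => Ψ k z) n).det) :
    ∀ z ∈ I, deriv (deriv V) z = 2 * V z ^ 3 - 4 * z * V z + 4 * b + 2 := by
  have L0 := fun z hz => logder_eq D I hI ev hev h c a hrec g C hg hg0 hC Ψ hΨ0 hΨ n z hz (hn0 z hz)
  have L1 := fun z hz => logder_eq D I hI ev hev h c a hrec g C hg hg0 hC Ψ hΨ0 hΨ (n + 1) z hz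
    (hn1 z hz)
  set F := (hank a n).det with hF
  set G := (hank a (n + 1)).det with hG
  have hVe : ∀ z ∈ I, V z = ev z (D G) / ev z G - ev z (D F) / ev z F + ev z h := by
    intro z hz
    rw [hV]
    simp only
    rw [(L0 z hz).2, (L1 z hz).2]
    push_cast
    ring
  have hV1 : ∀ z ∈ I, deriv V z = (ev z (D (D G)) * ev z G - ev z (D G) * ev z (D G)) / ev z G ^ 2
      - (ev z (D (D F)) * ev z F - ev z (D F) * ev z (D F)) / ev z F ^ 2 + ev z (D h) := by
    intro z hz
    have e : V =ᶠ[nhds z] fun z => ev z (D G) / ev z G - ev z (D F) / ev z F + ev z h := by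
      filter_upwards [hI.mem_nhds hz] with t ht using hVe t ht
    rw [e.deriv_eq]
    exact ((((hev _ z hz).div (hev _ z hz) (L1 z hz).1).sub
      ((hev _ z hz).div (hev _ z hz) (L0 z hz).1)).add (hev _ z hz)).deriv
  intro z hz
  have e : deriv V =ᶠ[nhds z] fun z =>
      (ev z (D (D G)) * ev z G - ev z (D G) * ev z (D G)) / ev z G ^ 2
      - (ev z (D (D F)) * ev z F - ev z (D F) * ev z (D F)) / ev z F ^ 2 + ev z (D h) := by
    filter_upwards [hI.mem_nhds hz] with t ht using hV1 t ht
  have key : ∀ H : A, ev z H ≠ 0 → HasDerivAt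
      (fun z => (ev z (D (D H)) * ev z H - ev z (D H) * ev z (D H)) / ev z H ^ 2)
      ((ev z (D (D (D H))) * ev z H ^ 2 - 3 * ev z (D H) * ev z (D (D H)) * ev z H
        + 2 * ev z (D H) ^ 3) / ev z H ^ 3) z := by
    intro H hH
    have : HasDerivAt (fun z => (ev z (D (D H)) * ev z H - ev z (D H) * ev z (D H)) / ev z H ^ 2)
      _ z := ((((hev (D (D H)) z hz).mul (hev H z hz)).sub
      ((hev (D H) z hz).mul (hev (D H) z hz))).div ((hev H z hz).pow 2) (pow_ne_zero 2 hH))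
    refine this.congr_deriv ?_
    simp only [Pi.mul_apply, Pi.sub_apply]
    field_simp
    push_cast
    ring
  have f0 := (L0 z hz).1
  have f1 := (L1 z hz).1
  have hd : HasDerivAt (fun z =>
      (ev z (D (D G)) * ev z G - ev z (D G) * ev z (D G)) / ev z G ^ 2
      - (ev z (D (D F)) * ev z F - ev z (D F) * ev z (D F)) / ev z F ^ 2 + ev z (D h)) _ z :=
    ((key G f1).sub (key F f0)).add (hev (D h) z hz)
  rw [e.deriv_eq, hd.deriv, hVe z hz]
  have hP' := congrArg (ev z) hP
  rw [map_Pnum, map_zero, Pnum_eq _ _ _ _ _ _ _ _ _ _ _ _ f0 f1, hzA z hz, hβ z hz] at hP'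
  have := (mul_eq_zero.1 hP').resolve_left (mul_ne_zero (pow_ne_zero _ f0) (pow_ne_zero _ f1))
  linear_combination this
end real

end P2

/-- If `u` solves P_II[α] on `I`, `ψ0` is nowhere vanishing with `ψ0' = u ψ0`, and
`w = -u' - u² + 2z`, then for every integer `N` with `τ_N`, `τ_{N+1}` nowhere zero on `I`,
the function `U = (log (τ_{N+1}/τ_N))'` solves P_II[α + N] on `I`. -/
theorem painleve2_determinant_formula
    (I : Set ℝ) (hIopen : IsOpen I) (hIconn : I.OrdConnected)
    (α : ℝ) (u ψ0 : ℝ → ℝ)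
    (hu_smooth : ContDiffOn ℝ (⊤ : ℕ∞) u I)
    (hu_P2 : ∀ z ∈ I,
      deriv (deriv u) z = 2 * (u z) ^ 3 - 4 * z * u z + 4 * (α + 1 / 2))
    (hψ0_smooth : ContDiffOn ℝ (⊤ : ℕ∞) ψ0 I)
    (hψ0_ne : ∀ z ∈ I, ψ0 z ≠ 0)
    (hψ0_lin : ∀ z ∈ I, deriv ψ0 z = u z * ψ0 z)
    (w : ℝ → ℝ)
    (hw : w = fun z => -deriv u z - (u z) ^ 2 + 2 * z)
    (ψ φ : ℕ → ℝ → ℝ)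
    (hψ_zero : ψ 0 = ψ0)
    (hφ_zero : ∀ z ∈ I, φ 0 z = w z / (2 * ψ0 z))
    (hψ_rec : ∀ n : ℕ, ∀ z ∈ I, ψ (n + 1) z =
      deriv (ψ n) z + (w z / (2 * ψ0 z)) *
        ∑ k ∈ Finset.range n, ψ k z * ψ (n - 1 - k) z)
    (hφ_rec : ∀ n : ℕ, ∀ z ∈ I, φ (n + 1) z =
      deriv (φ n) z + ψ0 z *
        ∑ k ∈ Finset.range n, φ k z * φ (n - 1 - k) z)
    (N : ℤ)
    (hτN_ne : ∀ z ∈ I, hankelTau ψ φ N z ≠ 0)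
    (hτN1_ne : ∀ z ∈ I, hankelTau ψ φ (N + 1) z ≠ 0)
    (U : ℝ → ℝ)
    (hU : U = fun z => deriv (hankelTau ψ φ (N + 1)) z / hankelTau ψ φ (N + 1) z
      - deriv (hankelTau ψ φ N) z / hankelTau ψ φ N z) :
    ∀ z ∈ I,
      deriv (deriv U) z = 2 * (U z) ^ 3 - 4 * z * U z + 4 * (α + (N : ℝ) + 1 / 2) := by
  
  classical
  have hu1 : ∀ z ∈ I, HasDerivAt u (deriv u z) z := fun z hz =>
    ((hu_smooth.contDiffAt (hIopen.mem_nhds hz)).differentiableAt (by simp)).hasDerivAt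
  have hu2 : ∀ z ∈ I, HasDerivAt (deriv u) (deriv (deriv u) z) z := by
    intro z hz
    have h2 : ContDiffOn ℝ 1 (deriv u) I :=
      hu_smooth.deriv_of_isOpen hIopen
        (by rw [show (1 + 1 : WithTop ℕ∞) = ((2 : ℕ∞) : WithTop ℕ∞) by norm_num]
            exact WithTop.coe_le_coe.2 le_top)
    exact ((h2.contDiffAt (hIopen.mem_nhds hz)).differentiableAt (by simp)).hasDerivAt
  have hψ1 : ∀ z ∈ I, HasDerivAt ψ0 (u z * ψ0 z) z := fun z hz => by
    rw [← hψ0_lin z hz]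
    exact ((hψ0_smooth.contDiffAt (hIopen.mem_nhds hz)).differentiableAt (by simp)).hasDerivAt
  -- the generic differential ring
  let D0 : Derivation ℝ (MvPolynomial (Fin 4) ℝ) (MvPolynomial (Fin 4) ℝ) :=
    MvPolynomial.mkDerivation ℝ ![0, 1, MvPolynomial.X 3,
      2 * MvPolynomial.X 2 ^ 3 - 4 * MvPolynomial.X 1 * MvPolynomial.X 2
        + 4 * MvPolynomial.X 0 + 2]
  obtain ⟨D, hDD⟩ := P2.int_derivation D0
  let ev : ℝ → MvPolynomial (Fin 4) ℝ →+* ℝ := fun z => MvPolynomial.eval ![α, z, u z, deriv u z]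
  have evX : ∀ z i, ev z (MvPolynomial.X i) = ![α, z, u z, deriv u z] i := fun z i =>
    MvPolynomial.eval_X i
  have evC : ∀ z r, ev z (MvPolynomial.C r) = r := fun z r => MvPolynomial.eval_C r
  have DX : ∀ i, D (MvPolynomial.X i) = (![0, 1, MvPolynomial.X 3,
      2 * MvPolynomial.X 2 ^ 3 - 4 * MvPolynomial.X 1 * MvPolynomial.X 2
        + 4 * MvPolynomial.X 0 + 2] : Fin 4 → MvPolynomial (Fin 4) ℝ) i := fun i =>
    (hDD _).trans (MvPolynomial.mkDerivation_X ℝ _ i)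
  have hev : ∀ x, ∀ z ∈ I, HasDerivAt (fun t => ev t x) (ev z (D x)) z := by
    intro x z hz
    induction x using MvPolynomial.induction_on with
    | C r =>
      have : D (MvPolynomial.C r) = 0 := (hDD _).trans (MvPolynomial.derivation_C D0 r)
      rw [this, map_zero]
      simp only [evC]
      exact hasDerivAt_const z r
    | add p q hp hq =>
      simp only [map_add]
      exact hp.add hq
    | mul_X p i hp =>
      have hX : HasDerivAt (fun t => ev t (MvPolynomial.X i)) (ev z (D (MvPolynomial.X i))) z := by
        rw [DX]
        simp only [evX]
        fin_cases i
        · simpa using hasDerivAt_const z α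
        · simpa using hasDerivAt_id' z
        · simpa [evX] using hu1 z hz
        · have := hu2 z hz
          rw [hu_P2 z hz] at this
          simp [evX, map_ofNat]
          convert this using 1
          ring
      have := hp.mul hX
      simp only [map_mul, Derivation.leibniz, smul_eq_mul, map_add]
      refine HasDerivAt.congr_deriv (f := fun t => ev t p * ev t (MvPolynomial.X i)) this ?_
      ring
  let w2 : MvPolynomial (Fin 4) ℝ := MvPolynomial.C (1 / 2) *
    (-MvPolynomial.X 3 - MvPolynomial.X 2 ^ 2 + 2 * MvPolynomial.X 1)
  have hw2 : 2 * w2 = -MvPolynomial.X 3 - MvPolynomial.X 2 ^ 2 + 2 * MvPolynomial.X 1 := by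
    have : (2 : MvPolynomial (Fin 4) ℝ) * MvPolynomial.C (1 / 2) = 1 := by
      rw [← MvPolynomial.C_1, show (2 : MvPolynomial (Fin 4) ℝ) = MvPolynomial.C 2 from rfl,
        ← MvPolynomial.C_mul]
      norm_num
    simp only [w2]
    rw [← mul_assoc, this, one_mul]
  have evw : ∀ z, ev z w2 = w z / 2 := by
    intro z
    rw [hw]
    simp only [w2, map_mul, evC, map_add, map_sub, map_neg, map_pow, evX, map_ofNat]
    simp
    ring
  have hw20 : w2 ≠ 0 := by
    intro h
    have := congrArg (MvPolynomial.eval (![0, 1, 0, 0] : Fin 4 → ℝ)) h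
    simp [w2] at this
  have ne1 : ∀ n : ℕ, (MvPolynomial.X 0 : MvPolynomial (Fin 4) ℝ) + n + 1 ≠ 0 := by
    intro n h
    have := congrArg (MvPolynomial.eval (![0, 0, 0, 0] : Fin 4 → ℝ)) h
    simp at this
    exact absurd this (by positivity)
  have ne2 : ∀ n : ℕ, -(MvPolynomial.X 0 : MvPolynomial (Fin 4) ℝ) + n + 1 ≠ 0 := by
    intro n h
    have := congrArg (MvPolynomial.eval (![0, 0, 0, 0] : Fin 4 → ℝ)) h
    simp at this
    exact absurd this (by positivity)
  have hinj := IsFractionRing.injective (MvPolynomial (Fin 4) ℝ)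
    (FractionRing (MvPolynomial (Fin 4) ℝ))
  have hchar : CharZero (FractionRing (MvPolynomial (Fin 4) ℝ)) :=
    charZero_of_injective_algebraMap hinj
  obtain ⟨D', hD'⟩ := P2.frac_derivation (MvPolynomial (Fin 4) ℝ)
    (FractionRing (MvPolynomial (Fin 4) ℝ)) D
  have key := P2.poly_identities (algebraMap _ (FractionRing (MvPolynomial (Fin 4) ℝ))) hinj D D' hD'
    (MvPolynomial.X 0) (MvPolynomial.X 1) (MvPolynomial.X 2) (MvPolynomial.X 3) w2
    (DX 0) (DX 1) (DX 2) (DX 3) hw2 hw20 ne1 ne2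
    (P2.gseq D (MvPolynomial.X 2) w2 1) (P2.gseq D (-MvPolynomial.X 2) 1 w2)
    (P2.gseq_zero _ _ _ _) (P2.gseq_zero _ _ _ _) (P2.gseq_succ _ _ _ _) (P2.gseq_succ _ _ _ _)
  have tau_nonneg : ∀ n : ℕ, hankelTau ψ φ (n : ℤ)
      = fun z => (P2.hank (fun k => ψ k z) n).det := by
    intro n
    funext z
    simp [hankelTau, P2.hank]
  have tau_neg : ∀ n : ℕ, hankelTau ψ φ (-(n : ℤ))
      = fun z => (P2.hank (fun k => φ k z) n).det := by
    intro n
    funext z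
    rcases Nat.eq_zero_or_pos n with rfl | hn
    · simp [hankelTau, P2.hank]
    · have : ¬ (0 ≤ -(n : ℤ)) := by omega
      unfold hankelTau
      rw [if_neg this]
      have aux : ∀ m : ℕ, m = n →
          Matrix.det (Matrix.of fun i j : Fin m => φ ((i : ℕ) + (j : ℕ)) z)
            = (P2.hank (fun k => φ k z) n).det := by
        rintro m rfl
        rfl
      exact aux _ (by simp)
  intro z hz
  rcases lt_or_ge N 0 with hN | hN
  · obtain ⟨n, rfl⟩ : ∃ n : ℕ, N = -((n + 1 : ℕ) : ℤ) := ⟨(-N - 1).toNat, by omega⟩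
    have e1 : -((n + 1 : ℕ) : ℤ) + 1 = -(n : ℤ) := by push_cast; ring
    rw [e1] at hτN1_ne hU
    simp only [tau_neg] at hτN_ne hτN1_ne hU
    have hm := P2.real_main D I hIopen ev hev (-MvPolynomial.X 2) 1
      (P2.gseq D (-MvPolynomial.X 2) 1 w2) (P2.gseq_succ _ _ _ _) (fun z => (ψ0 z)⁻¹) ψ0
      (by
        intro z hz
        have h0 := hψ0_ne z hz
        refine ((hψ1 z hz).inv h0).congr_deriv ?_
        rw [map_neg, evX]
        simp
        field_simp)
      (fun z hz => inv_ne_zero (hψ0_ne z hz))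
      (fun z hz => by rw [map_one]; exact mul_inv_cancel₀ (hψ0_ne z hz))
      φ
      (fun z hz => by
        rw [hφ_zero z hz, P2.gseq_zero, evw]
        have h0 := hψ0_ne z hz
        field_simp)
      hφ_rec n (MvPolynomial.X 1) (-MvPolynomial.X 0 + (n : MvPolynomial (Fin 4) ℝ)) (-α + n)
      (fun z _ => by rw [evX]; rfl) (fun z _ => by simp [evX])
      (key n).2 hτN1_ne hτN_ne (fun z => -U z)
      (by rw [hU]; funext t; ring) z hz
    have d1 : deriv (fun z => -U z) = fun z => -deriv U z := by
      funext t; exact deriv.fun_neg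
    rw [d1, deriv.fun_neg] at hm
    push_cast
    linear_combination -hm
  · obtain ⟨n, rfl⟩ := Int.eq_ofNat_of_zero_le hN
    have e1 : (n : ℤ) + 1 = ((n + 1 : ℕ) : ℤ) := by push_cast; ring
    rw [e1] at hτN1_ne hU
    simp only [tau_nonneg] at hτN_ne hτN1_ne hU
    have hm := P2.real_main D I hIopen ev hev (MvPolynomial.X 2) w2
      (P2.gseq D (MvPolynomial.X 2) w2 1) (P2.gseq_succ _ _ _ _) ψ0 (fun z => w z / (2 * ψ0 z))
      (fun z hz => by rw [evX]; exact hψ1 z hz) hψ0_ne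
      (fun z hz => by
        rw [evw]
        have h0 := hψ0_ne z hz
        field_simp)
      ψ (fun z hz => by rw [hψ_zero, P2.gseq_zero, map_one, mul_one])
      hψ_rec n (MvPolynomial.X 1) (MvPolynomial.X 0 + (n : MvPolynomial (Fin 4) ℝ)) (α + n)
      (fun z _ => by rw [evX]; rfl) (fun z _ => by simp [evX])
      (key n).1 hτN_ne hτN1_ne U hU z hz
    push_cast
    linear_combination hm
end
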